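/- arXiv:2209.00140 — 2 statements merged into one kernel-verified Lean document; each statement's English description precedes it below -/
import Mathlib

section
/- There exists a constant c > 0 such that for every integer n ≥ 2, every essential cover of the n-cube {0,1}^n consisting of k hyperplanes satisfies k ≥ c · n^{5/9} / (log n)^{4/9}. -/
/-!
The proof shows `n ≤ C k^{3/2} log (8 k)` for every essential cover of the `n`-cube by `k`
hyperplanes; this is stronger than the bound required, since it gives `k ≥ c n^{5/9}` with room to
spare and `log n` is bounded below for `n ≥ 2`.

Every row `v i` has at most `2 k` nonzero entries (`card_support_le`). The nonzero entries of a row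
are grouped into scales, `|v i j| ∈ [3^m, 3^(m+1))`. If `n` is too large, there is a nonempty set
`G` of coordinates on which the rows with few scales (about `log k`), normalised to unit vectors
`w i` on `G`, satisfy `∑ i, |w i j| ≤ δ` for every `j ∈ G` (`exists_balanced_subset`). This is
obtained by maximising `δ #G - ∑ i, Φ i G`, where the potential `Φ` of a row sums the square roots
of the numbers of entries at the various scales: deleting `j` lowers the potential by at least a
constant times `|w i j|` (`abs_div_norm_le_potential_sub`).

Since `G` is nonempty, some hyperplane involves it, and the vertex covered by that hyperplane alone
is missed by all hyperplanes not involving `G`. Freezing the coordinates of that vertex off `G`, it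
remains to find a vertex on `G` avoiding the hyperplanes that do involve `G`. Bang's lemma
(`exists_sign_bang`) provides a point `p ∈ [1/4, 3/4]^G` at distance at least `θ` from all
hyperplanes with few scales. Round `p` randomly and independently to a vertex. A hyperplane with few
scales is hit with probability at most `exp (-θ² / 4)` by Chernoff's bound (`sum_wt_hit_le`). A
hyperplane with at least `2 τ` scales has `τ` entries with well-separated scales, whose subset sums
are distinct, so it is hit with probability at most `(3/4)^τ` (`sum_wt_hit_le_of_levels`). For
`θ² ≈ τ ≈ log k` the union bound leaves a vertex that is not covered, a contradiction.
-/

open Finset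

/-- A point of the `n`-cube `{0,1}^n`. -/
def IsCubeVertex {n : ℕ} (x : Fin n → ℝ) : Prop := ∀ j, x j = 0 ∨ x j = 1

/-- The hyperplanes `⟨v i, x⟩ = μ i`, `i ∈ [k]`, with `v i ∈ ℝ^n \ {0}`, form an
essential cover of the `n`-cube `{0,1}^n`. -/
def IsEssentialCover {n k : ℕ} (v : Fin k → Fin n → ℝ) (μ : Fin k → ℝ) : Prop :=
  (∀ i, v i ≠ 0) ∧
  (∀ x : Fin n → ℝ, IsCubeVertex x → ∃ i, ∑ j, v i j * x j = μ i) ∧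
  (∀ j : Fin n, ∃ i, v i j ≠ 0) ∧
  (∀ i, ∃ x : Fin n → ℝ, IsCubeVertex x ∧ ∑ j, v i j * x j = μ i ∧
    ∀ i', i' ≠ i → ∑ j, v i' j * x j ≠ μ i')

/-! ### Size of the supports -/

theorem alternating_sum_prod_eq_zero {α β : Type*} [DecidableEq α] [DecidableEq β]
    (a : α → β → ℝ) (I : Finset α) :
    ∀ (c : α → ℝ) (S : Finset β), #I < #S →
      ∑ T ∈ S.powerset, (-1 : ℝ) ^ #T * ∏ i ∈ I, (c i + ∑ j ∈ T, a i j) = 0 := by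
  induction I using Finset.induction_on with
  | empty =>
    intro c S hS
    have hne : S.Nonempty := card_pos.mp (by simpa using hS)
    have := Finset.sum_powerset_neg_one_pow_card_of_nonempty hne
    simp only [prod_empty, mul_one]
    exact_mod_cast this
  | insert i I hi ih =>
    intro c S hS
    rw [card_insert_of_notMem hi] at hS
    have hsplit : ∀ T ∈ S.powerset,
        (-1 : ℝ) ^ #T * ∏ i' ∈ insert i I, (c i' + ∑ j ∈ T, a i' j) =
          c i * ((-1 : ℝ) ^ #T * ∏ i' ∈ I, (c i' + ∑ j ∈ T, a i' j)) +
          ∑ j ∈ S, a i j * (if j ∈ T then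
            (-1 : ℝ) ^ #T * ∏ i' ∈ I, (c i' + ∑ j ∈ T, a i' j) else 0) := by
      intro T hT
      rw [prod_insert hi]
      have : ∑ j ∈ T, a i j = ∑ j ∈ S, if j ∈ T then a i j else 0 := by
        rw [← sum_filter, filter_mem_eq_inter, inter_eq_right.mpr (mem_powerset.mp hT)]
      have h2 : ∑ j ∈ S, a i j * (if j ∈ T then
            (-1 : ℝ) ^ #T * ∏ i' ∈ I, (c i' + ∑ j ∈ T, a i' j) else 0) =
            (∑ j ∈ T, a i j) * ((-1 : ℝ) ^ #T * ∏ i' ∈ I, (c i' + ∑ j ∈ T, a i' j)) := by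
        rw [this, sum_mul]
        refine sum_congr rfl fun j _ => ?_
        split_ifs <;> ring
      rw [h2]; ring
    rw [sum_congr rfl hsplit, sum_add_distrib, ← mul_sum, ih c S (by omega), mul_zero, zero_add,
      sum_comm]
    refine sum_eq_zero fun j hj => ?_
    rw [← mul_sum]
    -- The subsets containing `j` are `insert j T` with `T ⊆ S \ {j}`.
    have hj' : j ∉ S.erase j := notMem_erase j S
    rw [← insert_erase hj, sum_powerset_insert hj']
    have h0 : ∑ T ∈ (S.erase j).powerset, (if j ∈ T then
        (-1 : ℝ) ^ #T * ∏ i' ∈ I, (c i' + ∑ j ∈ T, a i' j) else 0) = 0 := by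
      refine sum_eq_zero fun T hT => if_neg fun h => hj' (mem_powerset.mp hT h)
    have h1 : ∑ T ∈ (S.erase j).powerset, (if j ∈ insert j T then
        (-1 : ℝ) ^ #(insert j T) * ∏ i' ∈ I, (c i' + ∑ j ∈ insert j T, a i' j) else 0) =
        - ∑ T ∈ (S.erase j).powerset, (-1 : ℝ) ^ #T *
          ∏ i' ∈ I, ((c i' + a i' j) + ∑ j ∈ T, a i' j) := by
      rw [← sum_neg_distrib]
      refine sum_congr rfl fun T hT => ?_
      have hjT : j ∉ T := fun h => hj' (mem_powerset.mp hT h)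
      rw [if_pos (mem_insert_self j T), card_insert_of_notMem hjT, pow_succ]
      simp only [sum_insert hjT, add_assoc]
      ring
    rw [h0, h1, ih (fun i' => c i' + a i' j) (S.erase j) (by rw [card_erase_of_mem hj]; omega)]
    simp

/-- Around the vertex `x` covered by the hyperplane `i` alone, the other `k - 1` hyperplanes cover
every vertex obtained by flipping coordinates in which `⟨v i, ·⟩` increases, but not `x` itself.
A polynomial vanishing at all vertices of a cube except one has degree at least the dimension, so
at most `k` coordinates increase `⟨v i, ·⟩`, and likewise at most `k` decrease it. -/
theorem card_support_le {n k : ℕ} {v : Fin k → Fin n → ℝ} {μ : Fin k → ℝ}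
    (h : IsEssentialCover v μ) (i : Fin k) : #{j | v i j ≠ 0} ≤ 2 * k := by
  obtain ⟨-, hcov, -, hess⟩ := h
  obtain ⟨x, hx, hxi, hxo⟩ := hess i
  -- Flipping the coordinates of `x` in `T ⊆ S` moves `⟨v i, x⟩` strictly in one direction.
  have key : ∀ S : Finset (Fin n),
      (∀ T ⊆ S, T.Nonempty → ∑ j ∈ T, v i j * (1 - 2 * x j) ≠ 0) → #S ≤ k := by
    intro S hS
    by_contra hlt
    have hcard : #(univ.erase i : Finset (Fin k)) < #S := by
      rw [card_erase_of_mem (mem_univ i), card_univ, Fintype.card_fin]; omega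
    have halt := alternating_sum_prod_eq_zero (fun i' j => v i' j * (1 - 2 * x j))
      (univ.erase i) (fun i' => ∑ j, v i' j * x j - μ i') S hcard
    rw [sum_eq_single_of_mem ∅ (empty_mem_powerset S)] at halt
    · simp only [card_empty, pow_zero, one_mul, sum_empty, add_zero] at halt
      rw [prod_eq_zero_iff] at halt
      obtain ⟨i', hi', h0⟩ := halt
      exact hxo i' (ne_of_mem_erase hi') (sub_eq_zero.mp h0)
    · intro T hT hne
      have hflip : ∀ i', ∑ j, v i' j * (if j ∈ T then 1 - x j else x j) =
          ∑ j, v i' j * x j + ∑ j ∈ T, v i' j * (1 - 2 * x j) := by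
        intro i'
        have : ∑ j ∈ T, v i' j * (1 - 2 * x j) =
            ∑ j, if j ∈ T then v i' j * (1 - 2 * x j) else 0 := by
          rw [← sum_filter]; simp
        rw [this, ← sum_add_distrib]
        refine sum_congr rfl fun j _ => ?_
        split_ifs <;> ring
      obtain ⟨i', hi'⟩ := hcov (fun j => if j ∈ T then 1 - x j else x j) (by
        intro j
        rcases hx j with h | h <;> by_cases hj : j ∈ T <;> simp [h, hj])
      rw [hflip] at hi'
      have hne' : i' ≠ i := by
        rintro rfl
        exact hS T (mem_powerset.mp hT) (nonempty_iff_ne_empty.mpr hne) (by linarith)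
      rw [prod_eq_zero (mem_erase.mpr ⟨hne', mem_univ i'⟩), mul_zero]
      linarith
  set P : Finset (Fin n) := univ.filter fun j => 0 < v i j * (1 - 2 * x j) with hP
  set N : Finset (Fin n) := univ.filter fun j => v i j * (1 - 2 * x j) < 0 with hN
  have hpos : #P ≤ k := key P fun T hT hne =>
    (sum_pos (fun j hj => (mem_filter.mp (hT hj)).2) hne).ne'
  have hneg : #N ≤ k := key N fun T hT hne =>
    (sum_neg (fun j hj => (mem_filter.mp (hT hj)).2) hne).ne
  have hsub : (univ.filter fun j => v i j ≠ 0) ⊆ P ∪ N := by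
    intro j hj
    have hvj : v i j ≠ 0 := (mem_filter.mp hj).2
    have hsgn : (1 - 2 * x j) ≠ 0 := by rcases hx j with h | h <;> rw [h] <;> norm_num
    rcases (mul_ne_zero hvj hsgn).lt_or_gt with h | h
    · exact mem_union_right _ (mem_filter.mpr ⟨mem_univ _, h⟩)
    · exact mem_union_left _ (mem_filter.mpr ⟨mem_univ _, h⟩)
  have := (card_le_card hsub).trans (card_union_le _ _)
  omega

/-! ### Scales and the potential -/

/-- The base-`3` scale of a real number: `3 ^ lev x ≤ |x| < 3 ^ (lev x + 1)` for `x ≠ 0`. -/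
noncomputable def lev (x : ℝ) : ℤ := Int.log 3 |x|

theorem zpow_lev_le {x : ℝ} (hx : x ≠ 0) : (3 : ℝ) ^ lev x ≤ |x| := by
  have := Int.zpow_log_le_self (b := 3) (r := |x|) (by norm_num) (abs_pos.mpr hx)
  exact_mod_cast this

theorem lt_zpow_lev (x : ℝ) : |x| < 3 * (3 : ℝ) ^ lev x := by
  have := Int.lt_zpow_succ_log_self (b := 3) (by norm_num) |x|
  rw [zpow_add_one₀ (by norm_num)] at this
  push_cast at this
  rw [mul_comm]; exact this

section Levels
variable {α : Type*}

/-- The number of `j ∈ G` with `a j ≠ 0` at scale `m`. -/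
noncomputable def levelCard (a : α → ℝ) (G : Finset α) (m : ℤ) : ℕ :=
  #{j ∈ G | a j ≠ 0 ∧ lev (a j) = m}

/-- The scales occurring among the nonzero `a j`, `j ∈ G`. -/
noncomputable def levels (a : α → ℝ) (G : Finset α) : Finset ℤ :=
  {j ∈ G | a j ≠ 0}.image fun j => lev (a j)

/-- The potential `∑ₘ √cₘ`, where `cₘ` counts the `j ∈ G` with `a j` at scale `m`. -/
noncomputable def potential (a : α → ℝ) (G : Finset α) : ℝ :=
  ∑ m ∈ levels a G, √(levelCard a G m)

theorem levelCard_eq_zero {a : α → ℝ} {G : Finset α} {m : ℤ} (hm : m ∉ levels a G) :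
    levelCard a G m = 0 := by
  rw [levelCard, card_eq_zero, filter_eq_empty_iff]
  rintro j hj ⟨h0, rfl⟩
  exact hm (mem_image.mpr ⟨j, mem_filter.mpr ⟨hj, h0⟩, rfl⟩)

theorem levels_mono (a : α → ℝ) {G H : Finset α} (h : G ⊆ H) : levels a G ⊆ levels a H :=
  image_subset_image (filter_subset_filter _ h)

theorem levelCard_mono (a : α → ℝ) {G H : Finset α} (h : G ⊆ H) (m : ℤ) :
    levelCard a G m ≤ levelCard a H m :=
  card_le_card (filter_subset_filter _ h)

theorem potential_eq_sum {a : α → ℝ} {G H : Finset α} (h : G ⊆ H) :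
    potential a G = ∑ m ∈ levels a H, √(levelCard a G m) :=
  sum_subset (levels_mono a h) fun m _ hm => by simp [levelCard_eq_zero hm]

theorem potential_mono (a : α → ℝ) {G H : Finset α} (h : G ⊆ H) :
    potential a G ≤ potential a H := by
  rw [potential_eq_sum h]
  exact sum_le_sum fun m _ => Real.sqrt_le_sqrt (by exact_mod_cast levelCard_mono a h m)

theorem potential_nonneg (a : α → ℝ) (G : Finset α) : 0 ≤ potential a G :=
  sum_nonneg fun _ _ => Real.sqrt_nonneg _

/-- Deleting one coordinate lowers the potential by at least a constant times the
relative size of that coordinate. -/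
theorem abs_div_norm_le_potential_sub [DecidableEq α] (a : α → ℝ) {G : Finset α} {j : α} (hj : j ∈ G) :
    |a j| / √(∑ i ∈ G, a i ^ 2) ≤ 6 * potential a G - 6 * potential a (G.erase j) := by
  rcases eq_or_ne (a j) 0 with h0 | h0
  · have := potential_mono a (erase_subset j G)
    simp only [h0, abs_zero, zero_div]
    linarith
  set m := lev (a j) with hm
  have hmem : j ∈ {i ∈ G | a i ≠ 0 ∧ lev (a i) = m} := mem_filter.mpr ⟨hj, h0, rfl⟩
  have hmL : m ∈ levels a G := mem_image.mpr ⟨j, mem_filter.mpr ⟨hj, h0⟩, rfl⟩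
  have hcard : levelCard a (G.erase j) m = levelCard a G m - 1 := by
    rw [levelCard, levelCard, filter_erase, card_erase_of_mem hmem]
  have hpos : 1 ≤ levelCard a G m := card_pos.mpr ⟨j, hmem⟩
  set c := levelCard a G m with hc
  have hc1 : (1 : ℝ) ≤ c := by exact_mod_cast hpos
  have hdiff : √c - √(c - 1 : ℝ) ≤ potential a G - potential a (G.erase j) := by
    rw [potential_eq_sum (erase_subset j G), potential, ← sum_sub_distrib]
    refine le_trans (le_of_eq ?_) (single_le_sum (f := fun m => √(levelCard a G m : ℝ) -
      √(levelCard a (G.erase j) m : ℝ)) (fun m _ => sub_nonneg.mpr (Real.sqrt_le_sqrt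
        (by exact_mod_cast levelCard_mono a (erase_subset j G) m))) hmL)
    simp only [hcard, ← hc]
    rw [Nat.cast_sub hpos]; simp
  -- All `c` entries at the scale of `a j` contribute to the norm.
  have hnorm : (√c * 3 ^ m) ^ 2 ≤ ∑ i ∈ G, a i ^ 2 := by
    have h1 : (c : ℝ) * (3 ^ m) ^ 2 ≤ ∑ i ∈ G with a i ≠ 0 ∧ lev (a i) = m, a i ^ 2 := by
      rw [hc, levelCard, ← nsmul_eq_mul]
      refine card_nsmul_le_sum _ _ _ fun i hi => ?_
      obtain ⟨-, hi0, him⟩ := mem_filter.mp hi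
      rw [← sq_abs (a i)]
      have := zpow_lev_le hi0
      rw [him] at this
      gcongr
    rw [mul_pow, Real.sq_sqrt (by positivity)]
    exact h1.trans (sum_le_sum_of_subset_of_nonneg (filter_subset _ _) fun i _ _ => sq_nonneg _)
  have hroot := Real.le_sqrt_of_sq_le hnorm
  have hsc : 0 < √(c : ℝ) := Real.sqrt_pos.mpr (by linarith)
  have h3 : (0 : ℝ) < 3 ^ m := by positivity
  have hNpos : 0 < √(∑ i ∈ G, a i ^ 2) := lt_of_lt_of_le (by positivity) hroot
  have hlt := lt_zpow_lev (a j)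
  rw [← hm] at hlt
  have hsub : 1 ≤ 2 * √(c : ℝ) * (√c - √(c - 1 : ℝ)) := by
    have hs1 := Real.sq_sqrt (by linarith : (0 : ℝ) ≤ c)
    have hs2 := Real.sq_sqrt (by linarith : (0 : ℝ) ≤ c - 1)
    nlinarith [sq_nonneg (√(c : ℝ) - √(c - 1 : ℝ))]
  have hle : |a j| / √(∑ i ∈ G, a i ^ 2) ≤ 3 / √c := by
    rw [div_le_div_iff₀ hNpos hsc]
    nlinarith
  have : 3 / √(c : ℝ) ≤ 6 * (√c - √(c - 1 : ℝ)) := by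
    rw [div_le_iff₀ hsc]; nlinarith
  linarith

/-- Cauchy–Schwarz: the potential is at most the root of the number of scales times the size of
the support. -/
theorem potential_le (a : α → ℝ) (G : Finset α) :
    potential a G ≤ √(#(levels a G) * #{j ∈ G | a j ≠ 0}) := by
  refine Real.le_sqrt_of_sq_le ((sq_sum_le_card_mul_sum_sq).trans (le_of_eq ?_))
  congr 1
  rw [sum_congr rfl fun m _ => Real.sq_sqrt (Nat.cast_nonneg (levelCard a G m)), ← Nat.cast_sum]
  congr 1
  rw [levels, card_eq_sum_card_image (fun j => lev (a j)) {j ∈ G | a j ≠ 0}]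
  simp only [filter_filter, levelCard]

end Levels

/-! ### Bang's lemma -/

theorem exists_sign_bang {k n : ℕ} (w : Fin k → Fin n → ℝ) (γ : Fin k → ℝ) (θ : ℝ) :
    ∃ ε : Fin k → ℝ, (∀ i, ε i = 1 ∨ ε i = -1) ∧
      ∀ i, ∑ j, w i j ^ 2 = 1 →
        θ ≤ |∑ j, (θ * ∑ i', ε i' * w i' j) * w i j - γ i| := by
  classical
  let S : Finset (Fin k → ℝ) := Fintype.piFinset fun _ => ({1, -1} : Finset ℝ)
  have hS : S.Nonempty := ⟨fun _ => 1, by simp [S]⟩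
  obtain ⟨ε, hεS, hmax⟩ := exists_max_image S
    (fun ε => θ * ∑ j, (∑ i', ε i' * w i' j) ^ 2 - 2 * ∑ i', γ i' * ε i') hS
  have hε : ∀ i, ε i = 1 ∨ ε i = -1 := by simpa [S] using hεS
  refine ⟨ε, hε, fun i hi => ?_⟩
  have hmem : Function.update ε i (-ε i) ∈ S := by
    simp only [S, Fintype.mem_piFinset, mem_insert, mem_singleton]
    intro i'
    rcases eq_or_ne i' i with rfl | h
    · rcases hε i' with h | h <;> simp [h]
    · simpa [h] using hε i'
  have hflip : ∀ b : Fin k → ℝ, ∑ i', Function.update ε i (-ε i) i' * b i' =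
      ∑ i', ε i' * b i' - 2 * ε i * b i := by
    intro b
    rw [← add_sum_erase univ _ (mem_univ i), ← add_sum_erase univ (fun i' => ε i' * b i') (mem_univ i),
      Function.update_self, sum_congr rfl fun i' hi' => by
        rw [Function.update_of_ne (ne_of_mem_erase hi')]]
    ring
  have h := hmax _ hmem
  have hγ : ∑ i', γ i' * Function.update ε i (-ε i) i' = ∑ i', γ i' * ε i' - 2 * ε i * γ i := by
    simpa only [mul_comm] using hflip γ
  have hexp : ∑ j, (∑ i', ε i' * w i' j - 2 * ε i * w i j) ^ 2 =
      ∑ j, (∑ i', ε i' * w i' j) ^ 2 - 4 * ε i * ∑ j, (∑ i', ε i' * w i' j) * w i j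
        + 4 * ε i ^ 2 * ∑ j, w i j ^ 2 := by
    rw [mul_sum, mul_sum, ← sum_sub_distrib, ← sum_add_distrib]
    exact sum_congr rfl fun j _ => by ring
  have hX : ∑ j, (θ * ∑ i', ε i' * w i' j) * w i j =
      θ * ∑ j, (∑ i', ε i' * w i' j) * w i j := by
    rw [mul_sum]; exact sum_congr rfl fun j _ => by ring
  have hsq : ε i ^ 2 = 1 := by rcases hε i with h | h <;> simp [h]
  simp only [hflip, hγ, hexp] at h
  rw [hi, hsq] at h
  rw [hX]
  set A := ∑ j, (∑ i', ε i' * w i' j) * w i j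
  have hgoal : θ ≤ ε i * (θ * A - γ i) := by nlinarith
  refine hgoal.trans ((le_abs_self _).trans ?_)
  rw [abs_mul]
  rcases hε i with h | h <;> simp [h]

/-! ### Random subsets and concentration -/

/-- The probability of `T` when each `j ∈ G` is put in `T` independently with probability `p j`. -/
noncomputable def wt {α : Type*} [DecidableEq α] (G : Finset α) (p : α → ℝ) (T : Finset α) : ℝ :=
  (∏ j ∈ T, p j) * ∏ j ∈ G \ T, (1 - p j)

theorem wt_nonneg {α : Type*} [DecidableEq α] {G : Finset α} {p : α → ℝ}
    (hp : ∀ j ∈ G, 0 ≤ p j ∧ p j ≤ 1) {T : Finset α} (hT : T ⊆ G) : 0 ≤ wt G p T :=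
  mul_nonneg (prod_nonneg fun j hj => (hp j (hT hj)).1)
    (prod_nonneg fun j hj => sub_nonneg.mpr (hp j (mem_sdiff.mp hj).1).2)

theorem sum_wt {α : Type*} [DecidableEq α] (G : Finset α) (p : α → ℝ) :
    ∑ T ∈ G.powerset, wt G p T = 1 := by
  simp only [wt]
  rw [← prod_add]
  simp

theorem bernoulli_exp_le {p s : ℝ} (hp0 : 0 ≤ p) (hp1 : p ≤ 1) (hs : |s| ≤ 1) :
    p * Real.exp (s * (1 - p)) + (1 - p) * Real.exp (-(s * p)) ≤ Real.exp (s ^ 2) := by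
  have hs2 := abs_le.mp hs
  have bound : ∀ y : ℝ, |y| ≤ 1 → Real.exp y ≤ 1 + y + y ^ 2 := by
    intro y hy
    have := (abs_le.mp (Real.abs_exp_sub_one_sub_id_le hy)).2
    linarith
  have h1 : |s * (1 - p)| ≤ 1 := by
    rw [abs_mul, abs_of_nonneg (sub_nonneg.mpr hp1)]
    nlinarith [abs_nonneg s]
  have h2 : |-(s * p)| ≤ 1 := by
    rw [abs_neg, abs_mul, abs_of_nonneg hp0]
    nlinarith [abs_nonneg s]
  have e1 := mul_le_mul_of_nonneg_left (bound _ h1) hp0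
  have e2 := mul_le_mul_of_nonneg_left (bound _ h2) (sub_nonneg.mpr hp1)
  have e3 := Real.add_one_le_exp (s ^ 2)
  have e4 : 0 ≤ s ^ 2 * (1 - p * (1 - p)) := by
    apply mul_nonneg (sq_nonneg s); nlinarith
  nlinarith

/-- Moment generating function of a centred weighted sum of independent Bernoulli variables. -/
theorem sum_wt_exp_le {α : Type*} [DecidableEq α] {G : Finset α} {p s : α → ℝ}
    (hp : ∀ j ∈ G, 0 ≤ p j ∧ p j ≤ 1) (hs : ∀ j ∈ G, |s j| ≤ 1) :
    ∑ T ∈ G.powerset, wt G p T * Real.exp (∑ j ∈ T, s j - ∑ j ∈ G, s j * p j) ≤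
      Real.exp (∑ j ∈ G, s j ^ 2) := by
  have h : ∀ T ∈ G.powerset, wt G p T * Real.exp (∑ j ∈ T, s j - ∑ j ∈ G, s j * p j) =
      (∏ j ∈ T, p j * Real.exp (s j * (1 - p j))) *
        ∏ j ∈ G \ T, (1 - p j) * Real.exp (-(s j * p j)) := by
    intro T hT
    rw [prod_mul_distrib, prod_mul_distrib, ← Real.exp_sum, ← Real.exp_sum, wt,
      ← sum_sdiff (mem_powerset.mp hT) (f := fun j => s j * p j)]
    rw [show ∑ j ∈ T, s j - (∑ j ∈ G \ T, s j * p j + ∑ j ∈ T, s j * p j) =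
      ∑ j ∈ T, s j * (1 - p j) + ∑ j ∈ G \ T, -(s j * p j) by
        simp only [mul_sub, mul_one, sum_sub_distrib, sum_neg_distrib]; ring, Real.exp_add]
    ring
  rw [sum_congr rfl h, ← prod_add, Real.exp_sum]
  refine prod_le_prod (fun j hj => ?_) fun j hj => bernoulli_exp_le (hp j hj).1 (hp j hj).2 (hs j hj)
  have h0 := (hp j hj).1
  have h1 : 0 ≤ 1 - p j := sub_nonneg.mpr (hp j hj).2
  positivity

/-- Chernoff's bound with exponent `θ / 2`, which the small entries of `w` permit. -/
theorem sum_wt_upper_tail_le {α : Type*} [DecidableEq α] {G : Finset α} {p w : α → ℝ} {θ : ℝ}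
    (hθ : 0 ≤ θ) (hp : ∀ j ∈ G, 0 ≤ p j ∧ p j ≤ 1) (hw : ∀ j ∈ G, θ / 2 * |w j| ≤ 1)
    (hw2 : ∑ j ∈ G, w j ^ 2 ≤ 1) :
    ∑ T ∈ G.powerset with θ ≤ ∑ j ∈ T, w j - ∑ j ∈ G, w j * p j, wt G p T ≤
      Real.exp (-(θ ^ 2 / 4)) := by
  have h1 : ∀ j ∈ G, |θ / 2 * w j| ≤ 1 := fun j hj => by
    rw [abs_mul, abs_of_nonneg (by positivity : 0 ≤ θ / 2)]; exact hw j hj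
  have hmgf := sum_wt_exp_le hp h1
  have h2 : ∑ T ∈ G.powerset with θ ≤ ∑ j ∈ T, w j - ∑ j ∈ G, w j * p j,
      wt G p T * Real.exp (θ ^ 2 / 2) ≤
      ∑ T ∈ G.powerset, wt G p T *
        Real.exp (∑ j ∈ T, θ / 2 * w j - ∑ j ∈ G, θ / 2 * w j * p j) := by
    refine (sum_le_sum fun T hT => ?_).trans (sum_le_sum_of_subset_of_nonneg (filter_subset _ _)
      fun T hT _ => mul_nonneg (wt_nonneg hp (mem_powerset.mp hT)) (Real.exp_pos _).le)
    obtain ⟨hT, hTθ⟩ := mem_filter.mp hT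
    refine mul_le_mul_of_nonneg_left (Real.exp_le_exp.mpr ?_) (wt_nonneg hp (mem_powerset.mp hT))
    simp only [mul_assoc, ← mul_sum]
    nlinarith
  rw [← sum_mul] at h2
  have h3 : ∑ j ∈ G, (θ / 2 * w j) ^ 2 ≤ θ ^ 2 / 4 := by
    simp only [mul_pow, ← mul_sum]
    nlinarith [sq_nonneg (θ / 2)]
  have h4 := h2.trans (hmgf.trans (Real.exp_le_exp.mpr h3))
  have h5 : Real.exp (θ ^ 2 / 4) = Real.exp (-(θ ^ 2 / 4)) * Real.exp (θ ^ 2 / 2) := by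
    rw [← Real.exp_add]; ring_nf
  rw [h5] at h4
  exact le_of_mul_le_mul_right h4 (Real.exp_pos _)

/-- A hyperplane at distance at least `θ` from the mean is hit with probability at most
`exp (-θ² / 4)`. -/
theorem sum_wt_hit_le {α : Type*} [DecidableEq α] {G : Finset α} {p w : α → ℝ} {θ t : ℝ}
    (hθ : 0 ≤ θ) (hp : ∀ j ∈ G, 0 ≤ p j ∧ p j ≤ 1) (hw : ∀ j ∈ G, θ / 2 * |w j| ≤ 1)
    (hw2 : ∑ j ∈ G, w j ^ 2 ≤ 1) (ht : θ ≤ |∑ j ∈ G, w j * p j - t|) :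
    ∑ T ∈ G.powerset with ∑ j ∈ T, w j = t, wt G p T ≤ Real.exp (-(θ ^ 2 / 4)) := by
  have hmono : ∀ P Q : Finset α → Prop, ∀ [DecidablePred P] [DecidablePred Q], (∀ T, P T → Q T) →
      ∑ T ∈ G.powerset with P T, wt G p T ≤ ∑ T ∈ G.powerset with Q T, wt G p T := by
    intro P Q _ _ h
    refine sum_le_sum_of_subset_of_nonneg (fun T hT => ?_) fun T hT _ =>
      wt_nonneg hp (mem_powerset.mp (mem_filter.mp hT).1)
    exact mem_filter.mpr ⟨(mem_filter.mp hT).1, h T (mem_filter.mp hT).2⟩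
  rcases le_abs.mp ht with h | h
  · have := sum_wt_upper_tail_le (w := fun j => -w j) hθ hp (by simpa using hw) (by simpa using hw2)
    refine (hmono _ _ fun T hT => ?_).trans this
    simp only [neg_mul, sum_neg_distrib]
    linarith
  · refine (hmono _ _ fun T hT => ?_).trans (sum_wt_upper_tail_le hθ hp hw hw2)
    linarith

/-! ### Anti-concentration for entries of many scales -/

section Gaps
variable {α : Type*}

/-- Entries whose scales are pairwise at least two apart are dominated by the
geometric series of the scales. -/
theorem two_mul_sum_abs_lt [DecidableEq α] {a : α → ℝ} (Q : Finset α) :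
    (∀ x ∈ Q, ∀ y ∈ Q, x ≠ y → 2 ≤ |lev (a x) - lev (a y)|) →
    ∀ M : ℤ, (∀ x ∈ Q, lev (a x) + 2 ≤ M) → 2 * ∑ x ∈ Q, |a x| < 3 ^ M := by
  induction Q using Finset.induction_on_max_value (fun x => lev (a x)) with
  | empty => intro _ M _; simp only [sum_empty, mul_zero]; positivity
  | insert q Q hq hmax ih =>
    intro hgap M hM
    have h1 := ih (fun x hx y hy => hgap x (mem_insert_of_mem hx) y (mem_insert_of_mem hy))
      (lev (a q)) fun x hx => by
        have h := hgap q (mem_insert_self q Q) x (mem_insert_of_mem hx) (by rintro rfl; exact hq hx)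
        rw [abs_of_nonneg (sub_nonneg.mpr (hmax x hx))] at h
        linarith
    have h2 := lt_zpow_lev (a q)
    have h3 : (3 : ℝ) ^ (lev (a q) + 2) ≤ 3 ^ M :=
      zpow_le_zpow_right₀ (by norm_num) (hM q (mem_insert_self q Q))
    rw [zpow_add₀ (by norm_num)] at h3
    rw [sum_insert hq]
    norm_num at h3
    have h4 : (0 : ℝ) < 3 ^ lev (a q) := by positivity
    linarith

/-- Subset sums over entries with well-separated scales are distinct. -/
theorem eq_of_sum_eq [DecidableEq α] {a : α → ℝ} {Q : Finset α} (h0 : ∀ x ∈ Q, a x ≠ 0)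
    (hgap : ∀ x ∈ Q, ∀ y ∈ Q, x ≠ y → 2 ≤ |lev (a x) - lev (a y)|)
    {A B : Finset α} (hA : A ⊆ Q) (hB : B ⊆ Q) (h : ∑ x ∈ A, a x = ∑ x ∈ B, a x) : A = B := by
  by_contra hne
  -- The largest scale in the symmetric difference cannot be cancelled by the others.
  have hD : (symmDiff A B).Nonempty := nonempty_iff_ne_empty.mpr fun h =>
    hne (symmDiff_eq_bot.mp h)
  obtain ⟨q, hq, hmax⟩ := exists_max_image _ (fun x => lev (a x)) hD
  have hDQ : symmDiff A B ⊆ Q := fun x hx => by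
    rcases mem_symmDiff.mp hx with h | h
    · exact hA h.1
    · exact hB h.1
  have hsum : ∑ x ∈ symmDiff A B, (if x ∈ A then a x else -a x) = 0 := by
    have e1 : ∑ x ∈ Q, ((if x ∈ A then a x else 0) - if x ∈ B then a x else 0) = 0 := by
      rw [sum_sub_distrib, ← sum_filter, ← sum_filter, filter_mem_eq_inter, filter_mem_eq_inter,
        inter_eq_right.mpr hA, inter_eq_right.mpr hB, h, sub_self]
    rw [← e1, ← sum_subset hDQ]
    · refine sum_congr rfl fun x hx => ?_
      rcases mem_symmDiff.mp hx with h | h <;> simp [h.1, h.2]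
    · intro x _ hx
      by_cases hxA : x ∈ A <;> by_cases hxB : x ∈ B <;> simp_all [mem_symmDiff]
  have hle : |a q| ≤ ∑ x ∈ (symmDiff A B).erase q, |a x| := by
    rw [← add_sum_erase _ _ hq] at hsum
    have e2 : |a q| = |∑ x ∈ (symmDiff A B).erase q, (if x ∈ A then a x else -a x)| := by
      rw [← abs_neg (∑ x ∈ _, _), ← eq_neg_of_add_eq_zero_left hsum]
      split_ifs <;> simp
    rw [e2]
    refine (abs_sum_le_sum_abs _ _).trans (le_of_eq (sum_congr rfl fun x _ => ?_))
    split_ifs <;> simp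
  have hlt := two_mul_sum_abs_lt (a := a) ((symmDiff A B).erase q)
    (fun x hx y hy => hgap x (hDQ (mem_of_mem_erase hx)) y (hDQ (mem_of_mem_erase hy)))
    (lev (a q)) fun x hx => by
      have h := hgap q (hDQ hq) x (hDQ (mem_of_mem_erase hx)) (ne_of_mem_erase hx).symm
      rw [abs_of_nonneg (sub_nonneg.mpr (hmax x (mem_of_mem_erase hx)))] at h
      linarith
  have := zpow_lev_le (h0 q (hDQ hq))
  have := abs_nonneg (a q)
  linarith

/-- One representative per scale, over the scales of one parity. -/
theorem exists_gap_subset {a : α → ℝ} {G : Finset α} {τ : ℕ} (h : 2 * τ ≤ #(levels a G)) :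
    ∃ Q ⊆ G, τ ≤ #Q ∧ (∀ x ∈ Q, a x ≠ 0) ∧
      ∀ x ∈ Q, ∀ y ∈ Q, x ≠ y → 2 ≤ |lev (a x) - lev (a y)| := by
  -- Keep only the scales of one parity.
  obtain ⟨r, hr⟩ : ∃ r : ℤ, τ ≤ #{m ∈ levels a G | m % 2 = r} := by
    by_contra! hlt
    have h1 := hlt 0
    have h2 := hlt 1
    have h3 : levels a G ⊆ {m ∈ levels a G | m % 2 = 0} ∪ {m ∈ levels a G | m % 2 = 1} := by
      intro m hm
      rcases Int.emod_two_eq_zero_or_one m with h | h <;> simp only [mem_union, mem_filter, hm, h] <;> simp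
    have := (card_le_card h3).trans (card_union_le _ _)
    omega
  obtain ⟨Q, hQs, hinj, himg⟩ := exists_subset_injOn_image_eq_of_surjOn
    (f := fun j => lev (a j)) (({j ∈ G | a j ≠ 0} : Finset α) : Set α)
    ({m ∈ levels a G | m % 2 = r}) (by
      intro m hm
      obtain ⟨j, hj, rfl⟩ := mem_image.mp (mem_filter.mp (mem_coe.mp hm)).1
      exact ⟨j, hj, rfl⟩)
  have hQ : ∀ x ∈ Q, x ∈ G ∧ a x ≠ 0 := fun x hx => mem_filter.mp (hQs hx)
  have hpar : ∀ x ∈ Q, lev (a x) % 2 = r := fun x hx => by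
    have : lev (a x) ∈ ({m ∈ levels a G | m % 2 = r} : Finset ℤ) := by
      rw [← himg]; exact mem_image_of_mem _ hx
    exact (mem_filter.mp this).2
  refine ⟨Q, fun x hx => (hQ x hx).1, ?_, fun x hx => (hQ x hx).2, fun x hx y hy hxy => ?_⟩
  · rw [← card_image_of_injOn hinj, himg]; exact hr
  · have h1 := hpar x hx
    have h2 := hpar y hy
    have h3 : lev (a x) ≠ lev (a y) := fun h => hxy (hinj hx hy h)
    rcases abs_cases (lev (a x) - lev (a y)) with h | h <;> omega

/-- Conditionally on `T \ Q`, at most one choice of `T ∩ Q` gives the value `t`, and each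
choice has probability at most `(3/4) ^ #Q`. -/
theorem sum_wt_hit_le_of_levels [DecidableEq α] {a p : α → ℝ} {G : Finset α} {τ : ℕ} (t : ℝ)
    (h : 2 * τ ≤ #(levels a G)) (hp : ∀ j ∈ G, 1 / 4 ≤ p j ∧ p j ≤ 3 / 4) :
    ∑ T ∈ G.powerset with ∑ j ∈ T, a j = t, wt G p T ≤ (3 / 4) ^ τ := by
  obtain ⟨Q, hQG, hQτ, h0, hgap⟩ := exists_gap_subset h
  have hp01 : ∀ j ∈ G, 0 ≤ p j ∧ p j ≤ 1 := fun j hj =>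
    ⟨by linarith [(hp j hj).1], by linarith [(hp j hj).2]⟩
  have hp01' : ∀ j ∈ G \ Q, 0 ≤ p j ∧ p j ≤ 1 := fun j hj => hp01 j (mem_sdiff.mp hj).1
  have hwt : ∀ T ∈ G.powerset, wt G p T ≤ wt (G \ Q) p (T \ Q) * (3 / 4) ^ #Q := by
    intro T hT
    have hT := mem_powerset.mp hT
    have e1 : wt G p T = wt (G \ Q) p (T \ Q) *
        ((∏ j ∈ T ∩ Q, p j) * ∏ j ∈ Q \ T, (1 - p j)) := by
      have d1 : T = T \ Q ∪ T ∩ Q := by ext; simp; tauto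
      have d2 : G \ T = ((G \ Q) \ (T \ Q)) ∪ (Q \ T) := by
        ext x; have := @hQG x; have := @hT x; simp; tauto
      have i1 : Disjoint (T \ Q) (T ∩ Q) := disjoint_sdiff_inter T Q
      have i2 : Disjoint ((G \ Q) \ (T \ Q)) (Q \ T) := by
        rw [disjoint_left]; intro x; simp; tauto
      rw [wt, wt, d2, prod_union i2]
      nth_rewrite 1 [d1]
      rw [prod_union i1]
      ring
    have hc : #(T ∩ Q) + #(Q \ T) = #Q := by
      rw [inter_comm, add_comm]; exact card_sdiff_add_card_inter Q T
    rw [e1, ← hc, pow_add, ← prod_const, ← prod_const]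
    refine mul_le_mul_of_nonneg_left ?_ (wt_nonneg hp01' (sdiff_subset_sdiff hT le_rfl))
    refine mul_le_mul (prod_le_prod (fun j hj => ?_) fun j hj => ?_)
      (prod_le_prod (fun j hj => ?_) fun j hj => ?_) (prod_nonneg fun j hj => ?_)
      (prod_nonneg fun j hj => by norm_num)
    · exact (hp01 j (hT (mem_inter.mp hj).1)).1
    · exact (hp j (hT (mem_inter.mp hj).1)).2
    · linarith [(hp01 j (hQG (mem_sdiff.mp hj).1)).2]
    · linarith [(hp j (hQG (mem_sdiff.mp hj).1)).1]
    · linarith [(hp01 j (hQG (mem_sdiff.mp hj).1)).2]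
  have hinj : Set.InjOn (fun T => T \ Q) ↑({T ∈ G.powerset | ∑ j ∈ T, a j = t}) := by
    intro A hA B hB hAB
    have hA' := (mem_filter.mp (mem_coe.mp hA)).2
    have hB' := (mem_filter.mp (mem_coe.mp hB)).2
    simp only at hAB
    have hs : ∑ x ∈ A ∩ Q, a x = ∑ x ∈ B ∩ Q, a x := by
      rw [← sum_inter_add_sum_sdiff A Q] at hA'
      rw [← sum_inter_add_sum_sdiff B Q, ← hAB] at hB'
      linarith
    have := eq_of_sum_eq h0 hgap inter_subset_right inter_subset_right hs
    rw [← sdiff_union_inter A Q, ← sdiff_union_inter B Q, hAB, this]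
  calc ∑ T ∈ G.powerset with ∑ j ∈ T, a j = t, wt G p T
      ≤ ∑ T ∈ G.powerset with ∑ j ∈ T, a j = t, wt (G \ Q) p (T \ Q) * (3 / 4) ^ #Q :=
        sum_le_sum fun T hT => hwt T (mem_filter.mp hT).1
    _ = (∑ S ∈ image (fun T => T \ Q) {T ∈ G.powerset | ∑ j ∈ T, a j = t}, wt (G \ Q) p S) *
          (3 / 4) ^ #Q := by rw [sum_image hinj, sum_mul]
    _ ≤ 1 * (3 / 4) ^ #Q := by
        refine mul_le_mul_of_nonneg_right ?_ (by positivity)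
        rw [← sum_wt (G \ Q) p]
        refine sum_le_sum_of_subset_of_nonneg (fun S hS => ?_) fun S hS _ =>
          wt_nonneg hp01' (mem_powerset.mp hS)
        obtain ⟨T, hT, rfl⟩ := mem_image.mp hS
        exact mem_powerset.mpr
          (sdiff_subset_sdiff (mem_powerset.mp (mem_filter.mp hT).1) le_rfl)
    _ ≤ (3 / 4) ^ τ := by
        rw [one_mul]
        exact pow_le_pow_of_le_one (by norm_num) (by norm_num) hQτ

end Gaps

/-! ### Combining the estimates -/

/-- Call row `i` short if it has fewer than `2 * τ` scales on `G`. A maximal trade-off between the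
size of `G` and the total potential of the rows gives a nonempty `G` on which the short rows, once
normalised, have small column sums. -/
theorem exists_balanced_subset {n k τ : ℕ} {v : Fin k → Fin n → ℝ}
    (hsupp : ∀ i, #{j | v i j ≠ 0} ≤ 2 * k) {δ : ℝ}
    (hn : k * (12 * √(τ * k)) < n * δ) :
    ∃ G : Finset (Fin n), G.Nonempty ∧ ∀ j ∈ G,
      ∑ i with #(levels (v i) G) < 2 * τ, |v i j| / √(∑ j' ∈ G, v i j' ^ 2) ≤ δ := by
  -- `cap` bounds `6 * potential` for a row with fewer than `2 * τ` scales on `G`, so truncating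
  -- there leaves these rows unaffected and makes the total potential at most `k * cap`.
  set cap : ℝ := 12 * √(τ * k) with hcap
  have hcap0 : 0 ≤ cap := by positivity
  let φ : Fin k → Finset (Fin n) → ℝ := fun i G => min (6 * potential (v i) G) cap
  let F : Finset (Fin n) → ℝ := fun G => δ * #G - ∑ i, φ i G
  obtain ⟨G, -, hmax⟩ := exists_max_image univ F ⟨∅, mem_univ _⟩
  have hφ : ∀ i, ∀ G, #(levels (v i) G) < 2 * τ → φ i G = 6 * potential (v i) G := by
    intro i G hG
    refine min_eq_left ?_
    have h1 := potential_le (v i) G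
    have h2 : #{j ∈ G | v i j ≠ 0} ≤ 2 * k :=
      (card_le_card (filter_subset_filter _ (subset_univ G))).trans (hsupp i)
    have h3 : ((#(levels (v i) G) * #{j ∈ G | v i j ≠ 0} : ℕ) : ℝ) ≤ ((2 * τ) * (2 * k) : ℕ) := by
      exact_mod_cast Nat.mul_le_mul hG.le h2
    have h4 : √((2 * τ) * (2 * k) : ℝ) = 2 * √(τ * k) := by
      rw [show ((2 * τ) * (2 * k) : ℝ) = 2 ^ 2 * (τ * k) by ring,
        Real.sqrt_mul (by norm_num), Real.sqrt_sq (by norm_num)]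
    push_cast at h3
    have h5 := h1.trans (Real.sqrt_le_sqrt h3)
    rw [h4] at h5
    rw [hcap]; linarith
  refine ⟨G, nonempty_iff_ne_empty.mpr ?_, fun j hj => ?_⟩
  · rintro rfl
    have h1 := hmax univ (mem_univ _)
    have h2 : F ∅ = 0 := by simp [F, φ, potential, levels, hcap0]
    have h3 : ∑ i, φ i univ ≤ k * cap := by
      have := sum_le_card_nsmul univ (fun i => φ i univ) cap fun i _ => min_le_right _ _
      simpa using this
    rw [h2] at h1
    simp only [F, card_univ, Fintype.card_fin] at h1
    linarith
  · have h1 := hmax (G.erase j) (mem_univ _)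
    have h2 : ∑ i, (φ i G - φ i (G.erase j)) ≤ δ := by
      simp only [F, card_erase_of_mem hj, Nat.cast_sub (card_pos.mpr ⟨j, hj⟩)] at h1
      rw [sum_sub_distrib]
      push_cast at h1
      linarith
    refine le_trans (sum_le_sum fun i hi => ?_) ((sum_le_sum_of_subset_of_nonneg
      (filter_subset _ _) fun i _ _ => sub_nonneg.mpr (min_le_min_right cap ?_)).trans h2)
    · change _ ≤ φ i G - φ i (G.erase j)
      rw [hφ i G (mem_filter.mp hi).2]
      have := abs_div_norm_le_potential_sub (v i) hj
      have h3 : φ i (G.erase j) ≤ 6 * potential (v i) (G.erase j) := min_le_left _ _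
      linarith
    · have := potential_mono (v i) (erase_subset j G)
      linarith

/-- The main inequality, with free parameters: `θ` is the margin in Bang's lemma and `2 * τ`
the number of scales from which on a row is treated by anti-concentration. -/
theorem main_inequality {n k τ : ℕ} {v : Fin k → Fin n → ℝ} {μ : Fin k → ℝ}
    (h : IsEssentialCover v μ) {θ : ℝ} (hθ : 1 ≤ θ)
    (h1 : k * Real.exp (-(θ ^ 2 / 4)) < 1 / 2) (h2 : k * (3 / 4 : ℝ) ^ τ < 1 / 2) :
    (n : ℝ) ≤ 4 * θ * (k * (12 * √(τ * k))) := by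
  by_contra! hn
  have hδ : (0 : ℝ) ≤ 1 / (4 * θ) := by positivity
  obtain ⟨G, hGne, hG⟩ := exists_balanced_subset (τ := τ) (δ := 1 / (4 * θ))
    (fun i => card_support_le h i) (by
    rw [mul_one_div, lt_div_iff₀ (by positivity)]; linarith)
  obtain ⟨-, hcov, hall, hess⟩ := h
  -- A vertex missed by all hyperplanes that do not involve `G`.
  obtain ⟨x, hx, hxI⟩ : ∃ x : Fin n → ℝ, IsCubeVertex x ∧
      ∀ i, (∀ j ∈ G, v i j = 0) → ∑ j, v i j * x j ≠ μ i := by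
    obtain ⟨j, hj⟩ := hGne
    obtain ⟨i, hi⟩ := hall j
    obtain ⟨x, hx, -, hxi⟩ := hess i
    exact ⟨x, hx, fun i' hi' => hxi i' (by rintro rfl; exact hi (hi' j hj))⟩
  -- Off `G` the coordinates are frozen to those of `x`, leaving the equations
  -- `∑ j ∈ T, v i j = t i` for the subset `T ⊆ G` of coordinates equal to one.
  let t : Fin k → ℝ := fun i => μ i - ∑ j ∈ univ \ G, v i j * x j
  have hhit : ∀ T ⊆ G, ∃ i, (∃ j ∈ G, v i j ≠ 0) ∧ ∑ j ∈ T, v i j = t i := by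
    intro T hT
    have hsum : ∀ i, ∑ j, v i j * (if j ∈ G then (if j ∈ T then 1 else 0) else x j) =
        ∑ j ∈ univ \ G, v i j * x j + ∑ j ∈ T, v i j := by
      intro i
      rw [← sum_sdiff (subset_univ G)]
      congr 1
      · exact sum_congr rfl fun j hj => by rw [if_neg (mem_sdiff.mp hj).2]
      · rw [← inter_eq_right.mpr hT, ← filter_mem_eq_inter, sum_filter]
        exact sum_congr rfl fun j hj => by simp [hj]
    obtain ⟨i, hi⟩ := hcov (fun j => if j ∈ G then (if j ∈ T then 1 else 0) else x j) fun j => by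
      simp only
      split_ifs
      · exact Or.inr rfl
      · exact Or.inl rfl
      · exact hx j
    rw [hsum] at hi
    refine ⟨i, ?_, by simp only [t]; linarith⟩
    by_contra! h0
    refine hxI i h0 ?_
    rw [← hi, sum_eq_zero fun j hj => h0 j (hT hj), add_zero, ← sum_sdiff (subset_univ G),
      sum_eq_zero (s := G) fun j hj => by rw [h0 j hj, zero_mul], add_zero]
  let N : Fin k → ℝ := fun i => √(∑ j ∈ G, v i j ^ 2)
  let U : Finset (Fin k) := univ.filter fun i => #(levels (v i) G) < 2 * τ
  -- The short rows, restricted to `G` and normalised.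
  let w : Fin k → Fin n → ℝ := fun i j => if i ∈ U ∧ j ∈ G then v i j / N i else 0
  have hwcol : ∀ j, ∑ i, |w i j| ≤ 1 / (4 * θ) := by
    intro j
    by_cases hj : j ∈ G
    · refine le_trans (le_of_eq ?_) (hG j hj)
      rw [sum_filter]
      refine sum_congr rfl fun i _ => ?_
      by_cases hi : #(levels (v i) G) < 2 * τ
      · simp [w, U, hi, hj, N, abs_div, abs_of_nonneg (Real.sqrt_nonneg _)]
      · simp [w, U, hi]
    · simpa [w, hj] using hδ
  have hθw : ∀ j, θ * ∑ i, |w i j| ≤ 1 / 4 := fun j => by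
    have := mul_le_mul_of_nonneg_left (hwcol j) (by linarith : (0 : ℝ) ≤ θ)
    have h4 : θ * (1 / (4 * θ)) = 1 / 4 := by field_simp
    linarith
  -- The centre `1 / 2 + X` of the product measure keeps its distance from every short hyperplane;
  -- the `γ` in Bang's lemma is the position of the hyperplane relative to the centre of the cube.
  obtain ⟨ε, hε, hbang⟩ := exists_sign_bang w (fun i => t i / N i - 1 / 2 * ∑ j, w i j) θ
  let X : Fin n → ℝ := fun j => θ * ∑ i, ε i * w i j
  let p : Fin n → ℝ := fun j => 1 / 2 + X j
  have hX : ∀ j, |X j| ≤ 1 / 4 := fun j => by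
    refine le_trans ?_ (hθw j)
    rw [abs_mul, abs_of_nonneg (by linarith : (0 : ℝ) ≤ θ)]
    refine mul_le_mul_of_nonneg_left ((abs_sum_le_sum_abs _ _).trans
      (sum_le_sum fun i _ => ?_)) (by linarith)
    rw [abs_mul]
    rcases hε i with h | h <;> simp [h]
  have hp : ∀ j ∈ G, 1 / 4 ≤ p j ∧ p j ≤ 3 / 4 := fun j _ => by
    have := abs_le.mp (hX j)
    constructor <;> simp only [p] <;> linarith
  have hp01 : ∀ j ∈ G, 0 ≤ p j ∧ p j ≤ 1 := fun j hj =>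
    ⟨by linarith [(hp j hj).1], by linarith [(hp j hj).2]⟩
  have hrow : ∀ i ∈ (univ.filter fun i => ∃ j ∈ G, v i j ≠ 0),
      ∑ T ∈ G.powerset with ∑ j ∈ T, v i j = t i, wt G p T ≤
        Real.exp (-(θ ^ 2 / 4)) + (3 / 4) ^ τ := by
    intro i hi
    obtain ⟨j₀, hj₀, hv₀⟩ := (mem_filter.mp hi).2
    by_cases hU : #(levels (v i) G) < 2 * τ
    · have hiU : i ∈ U := mem_filter.mpr ⟨mem_univ i, hU⟩
      have hN2 : 0 < ∑ j ∈ G, v i j ^ 2 :=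
        sum_pos' (fun j _ => sq_nonneg _) ⟨j₀, hj₀, by positivity⟩
      have hN : 0 < N i := Real.sqrt_pos.mpr hN2
      have hwG : ∀ j ∈ G, w i j = v i j / N i := fun j hj => if_pos ⟨hiU, hj⟩
      have hw0 : ∀ f : Fin n → ℝ, ∑ j, f j * w i j = ∑ j ∈ G, f j * w i j := fun f =>
        (sum_subset (subset_univ G) fun j _ hj => by simp [w, hj]).symm
      have hnorm : ∑ j ∈ G, w i j ^ 2 = 1 := by
        rw [sum_congr rfl fun j hj => by rw [hwG j hj, div_pow], ← sum_div,
          Real.sq_sqrt hN2.le, div_self hN2.ne']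
      have hfar := hbang i (by simpa only [sq, hw0] using hnorm)
      have hhits : (G.powerset.filter fun T => ∑ j ∈ T, v i j = t i) =
          G.powerset.filter fun T => ∑ j ∈ T, w i j = t i / N i := by
        refine filter_congr fun T hT => ?_
        rw [sum_congr rfl fun j hj => hwG j (mem_powerset.mp hT hj), ← sum_div,
          div_left_inj' hN.ne']
      have hconc := sum_wt_hit_le (w := w i) (t := t i / N i) (θ := θ) (by linarith) hp01
        (fun j _ => by
          have := single_le_sum (f := fun i => |w i j|) (fun i _ => abs_nonneg _) (mem_univ i)
          have := mul_le_mul_of_nonneg_left this (by linarith : (0 : ℝ) ≤ θ)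
          linarith [hθw j])
        hnorm.le (by
          refine hfar.trans (le_of_eq (congrArg _ ?_))
          have e1 := hw0 fun _ => 1
          simp only [one_mul] at e1
          rw [hw0, e1]
          simp only [p, X, mul_add, sum_add_distrib, ← sum_mul]
          rw [sum_congr rfl fun j _ => mul_comm (w i j) _]
          ring)
      rw [hhits]
      exact hconc.trans (le_add_of_nonneg_right (by positivity))
    · exact (sum_wt_hit_le_of_levels (t i) (not_lt.mp hU) hp).trans
        (le_add_of_nonneg_left (Real.exp_pos _).le)
  -- The hyperplanes cover all vertices `T ⊆ G`, but their total probability is less than one.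
  have hunion : (1 : ℝ) ≤ k * (Real.exp (-(θ ^ 2 / 4)) + (3 / 4) ^ τ) := by
    rw [← sum_wt G p]
    have hk : (#(univ.filter fun i => ∃ j ∈ G, v i j ≠ 0) : ℝ) ≤ k := by
      have := card_filter_le (univ : Finset (Fin k)) fun i => ∃ j ∈ G, v i j ≠ 0
      rw [card_univ, Fintype.card_fin] at this
      exact_mod_cast this
    calc ∑ T ∈ G.powerset, wt G p T
        ≤ ∑ T ∈ G.powerset, ∑ i with ∃ j ∈ G, v i j ≠ 0,
            if ∑ j ∈ T, v i j = t i then wt G p T else 0 := by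
          refine sum_le_sum fun T hT => ?_
          obtain ⟨i, hi, hit⟩ := hhit T (mem_powerset.mp hT)
          have hw := wt_nonneg hp01 (mem_powerset.mp hT)
          refine le_trans (le_of_eq (if_pos hit).symm) (single_le_sum
            (f := fun i => if ∑ j ∈ T, v i j = t i then wt G p T else 0) (fun i _ => ?_)
            (mem_filter.mpr ⟨mem_univ i, hi⟩))
          split_ifs
          exacts [hw, le_rfl]
      _ = ∑ i with ∃ j ∈ G, v i j ≠ 0,
            ∑ T ∈ G.powerset with ∑ j ∈ T, v i j = t i, wt G p T := by
          rw [sum_comm]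
          exact sum_congr rfl fun i _ => (sum_filter _ _).symm
      _ ≤ #(univ.filter fun i => ∃ j ∈ G, v i j ≠ 0) •
            (Real.exp (-(θ ^ 2 / 4)) + (3 / 4) ^ τ) := sum_le_card_nsmul _ _ _ hrow
      _ ≤ k * (Real.exp (-(θ ^ 2 / 4)) + (3 / 4) ^ τ) := by
          rw [nsmul_eq_mul]
          exact mul_le_mul_of_nonneg_right hk (by positivity)
  linarith

/-- The choice `θ = 2 √L`, `τ = ⌈4 L⌉` with `L = log (8 k)` makes each of the two failure
probabilities at most `1 / (8 k)`. It gives `n ≤ C k^{3/2} log (8 k)`, and the logarithm is then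
absorbed into a power of `k`. -/
theorem le_mul_rpow_of_cover {n k : ℕ} {v : Fin k → Fin n → ℝ} {μ : Fin k → ℝ}
    (h : IsEssentialCover v μ) (hk : 1 ≤ k) : (n : ℝ) ≤ 1600 * (k : ℝ) ^ ((9 : ℝ) / 5) := by
  have hk1 : (1 : ℝ) ≤ k := by exact_mod_cast hk
  set L := Real.log (8 * k) with hL
  have hexpL : Real.exp L = 8 * k := Real.exp_log (by positivity)
  have hL2 : 1 ≤ L := by
    rw [hL, Real.le_log_iff_exp_le (by positivity)]
    linarith [Real.exp_one_lt_d9]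
  have hτ1 : 4 * L ≤ (⌈4 * L⌉₊ : ℝ) := Nat.le_ceil _
  have hτ2 : (⌈4 * L⌉₊ : ℝ) < 4 * L + 1 := Nat.ceil_lt_add_one (by linarith)
  set τ := ⌈4 * L⌉₊
  have hsq : √L ^ 2 = L := Real.sq_sqrt (by linarith)
  have hrt : 1 ≤ √L := Real.one_le_sqrt.mpr hL2
  have hnegL : Real.exp (-L) = 1 / (8 * k) := by rw [Real.exp_neg, hexpL, one_div]
  have hk8 : (k : ℝ) * (1 / (8 * k)) = 1 / 8 := by field_simp
  have hmain := main_inequality (τ := τ) h (θ := 2 * √L) (by linarith) (by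
    rw [show -((2 * √L) ^ 2 / 4) = -L by rw [mul_pow, hsq]; ring, hnegL, hk8]
    norm_num) (by
    have e1 : (3 / 4 : ℝ) ^ τ ≤ Real.exp (-L) := by
      have e2 : (3 / 4 : ℝ) ≤ Real.exp (-(1 / 4)) := by
        linarith [Real.add_one_le_exp (-(1 / 4) : ℝ)]
      refine (pow_le_pow_left₀ (by norm_num) e2 τ).trans ?_
      rw [← Real.exp_nat_mul]
      exact Real.exp_le_exp.mpr (by linarith)
    rw [hnegL] at e1
    have := mul_le_mul_of_nonneg_left e1 (by linarith : (0 : ℝ) ≤ k)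
    linarith)
  have hroot : √(τ * k : ℝ) ≤ 9 / 4 * (√L * √k) := by
    rw [← Real.sqrt_mul (by linarith)]
    refine Real.sqrt_le_iff.mpr ⟨by positivity, ?_⟩
    rw [mul_pow, Real.sq_sqrt (by positivity)]
    nlinarith
  have hlog : L ≤ 20 / 3 * (k : ℝ) ^ ((3 : ℝ) / 10) := by
    have e1 := Real.log_le_rpow_div (x := 8 * (k : ℝ)) (by positivity)
      (by norm_num : (0 : ℝ) < 3 / 10)
    rw [Real.mul_rpow (by norm_num) (by positivity)] at e1
    have e2 : (8 : ℝ) ^ ((3 : ℝ) / 10) ≤ 2 := by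
      rw [show (8 : ℝ) = 2 ^ (3 : ℝ) by norm_num, ← Real.rpow_mul (by norm_num)]
      calc (2 : ℝ) ^ ((3 : ℝ) * (3 / 10)) ≤ 2 ^ (1 : ℝ) :=
            Real.rpow_le_rpow_of_exponent_le (by norm_num) (by norm_num)
        _ = 2 := by norm_num
    have e3 : (0 : ℝ) ≤ (k : ℝ) ^ ((3 : ℝ) / 10) := by positivity
    have e4 := mul_le_mul_of_nonneg_right e2 e3
    rw [hL]
    linarith
  have hpow : (k : ℝ) ^ ((3 : ℝ) / 10) * (k * √k) = (k : ℝ) ^ ((9 : ℝ) / 5) := by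
    rw [Real.sqrt_eq_rpow]
    nth_rewrite 2 [← Real.rpow_one (k : ℝ)]
    rw [← Real.rpow_add (by positivity), ← Real.rpow_add (by positivity)]
    norm_num
  calc (n : ℝ) ≤ 4 * (2 * √L) * (k * (12 * √(τ * k))) := hmain
    _ ≤ 4 * (2 * √L) * (k * (12 * (9 / 4 * (√L * √k)))) := by gcongr
    _ = 216 * √L ^ 2 * (k * √k) := by ring
    _ ≤ 216 * (20 / 3 * (k : ℝ) ^ ((3 : ℝ) / 10)) * (k * √k) := by rw [hsq]; gcongr
    _ = 1440 * (k : ℝ) ^ ((9 : ℝ) / 5) := by rw [← hpow]; ring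
    _ ≤ 1600 * (k : ℝ) ^ ((9 : ℝ) / 5) := by gcongr; norm_num

/-- An essential cover of the `n`-cube has `Ω(n^{5/9}/(log n)^{4/9})` hyperplanes. -/
theorem essential_cover_lower_bound :
    ∃ c : ℝ, c > 0 ∧ ∀ n k : ℕ, 2 ≤ n →
      ∀ (v : Fin k → Fin n → ℝ) (μ : Fin k → ℝ), IsEssentialCover v μ →
        (k : ℝ) ≥ c * (n : ℝ) ^ ((5 : ℝ) / 9) / Real.log n ^ ((4 : ℝ) / 9) := by
  have hlog2 : 0 < Real.log 2 := Real.log_pos (by norm_num)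
  refine ⟨Real.log 2 ^ ((4 : ℝ) / 9) / 1600 ^ ((5 : ℝ) / 9), by positivity,
    fun n k hn v μ h => ?_⟩
  have hk : 1 ≤ k := by
    obtain ⟨i, -⟩ := h.2.1 0 fun j => Or.inl rfl
    exact i.pos
  have hlogn : Real.log 2 ≤ Real.log n :=
    Real.log_le_log (by norm_num) (by exact_mod_cast hn)
  have hpow : (n : ℝ) ^ ((5 : ℝ) / 9) ≤ 1600 ^ ((5 : ℝ) / 9) * k := by
    refine (Real.rpow_le_rpow (by positivity) (le_mul_rpow_of_cover h hk) (by norm_num)).trans ?_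
    rw [Real.mul_rpow (by norm_num) (by positivity), ← Real.rpow_mul (by positivity)]
    norm_num
  have hlogpow : Real.log 2 ^ ((4 : ℝ) / 9) ≤ Real.log n ^ ((4 : ℝ) / 9) :=
    Real.rpow_le_rpow hlog2.le hlogn (by norm_num)
  have hpos : 0 < Real.log n ^ ((4 : ℝ) / 9) := Real.rpow_pos_of_pos (hlog2.trans_le hlogn) _
  rw [ge_iff_le, div_le_iff₀ hpos, div_mul_eq_mul_div, div_le_iff₀ (by positivity)]
  calc Real.log 2 ^ ((4 : ℝ) / 9) * (n : ℝ) ^ ((5 : ℝ) / 9)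
      ≤ Real.log n ^ ((4 : ℝ) / 9) * (1600 ^ ((5 : ℝ) / 9) * k) := by gcongr
    _ = k * Real.log n ^ ((4 : ℝ) / 9) * 1600 ^ ((5 : ℝ) / 9) := by ring
end

section
/- There exist a constant C₅ > 0 and n₀ ∈ ℕ such that the following holds for all n ≥ n₀. Let [n] = N₁ ∪ N₂ ∪ N₃ be a partition, let S = ⌊C₅·log n⌋, let K₂ and K₄ be disjoint finite index sets with |K₄| ≤ n, and for each i ∈ K₂ ∪ K₄ let v_i ∈ ℝ^n and μ'_i ∈ ℝ. Assume: for every i ∈ K₂, the restriction of v_i to N₁ is the zero vector and |supp(v_i restricted to N₂)| ≥ 4|K₂|²; and for every i ∈ K₄, the restriction of v_i to N₁ ∪ N₂ has S scales, its smallest scale is non-zero, and the position of its smallest scale contains N₁. Then there exists w ∈ {0,1}^{N₂} such that for every i ∈ K₂ ∪ K₄ and every x ∈ {0,1}^{N₁}: ⟨w, v_i restricted to N₂⟩ ≠ μ'_i − ⟨x, v_i restricted to N₁⟩. -/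
/-!
The point `w` is chosen uniformly at random, and the probabilities of the bad events are summed.
Writing `ε = 2w - 1`, the event for `i` says that the signed sum `∑_{j ∈ N₂} ε_j v_{i,j}` falls at a
point (for `i ∈ K₂`, as `v_i` vanishes on `N₁`), or in a short interval around a point (for
`i ∈ K₄`, as `⟨x, v_i⟩` over `N₁` is at most `n` times the norm of the smallest scale).

For `i ∈ K₂` the Erdős–Littlewood–Offord inequality (Sperner's theorem, `littlewood_offord`) bounds
the probability by `1/(2|K₂|)`, so these events contribute at most `1/2`.

For `i ∈ K₄` the first half of the scales lie inside `N₂` and are far larger than the interval. Going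
from the larger scales to the smaller ones, each further scale costs a factor `9/10`
(`small_ball_step`, `small_ball_scales`): with probability at least `1/5` (second and fourth
moments) the contribution `y` of a scale of norm `σ` has `σ/2 ≤ |y| ≤ 3σ`; then the two values `±y`
lead to disjoint events, both contained in one event for the earlier scales with a larger radius.
With `50 log n` scales this beats `1/(2n)`, so these events contribute less than `1/2`.
-/

open Finset

/-- The `ℓ₂`-norm of the restriction of `v` to the coordinates in `P`. -/
noncomputable def scaleNorm {n : ℕ} (v : Fin n → ℝ) (P : Finset (Fin n)) : ℝ :=
  Real.sqrt (∑ j ∈ P, v j ^ 2)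

/-- The vector `v` has `S` scales on the coordinate set `A`, witnessed by the
partition `A = P 0 ∪ … ∪ P (S-1)`: `‖v^(s)‖₂ ≥ C₁ ‖v^(s+1)‖₂` for every `s < S - 1`,
where `C₁ = 4 · 4.706²`. The smallest scale is `v^(S-1)` and its position is `P (S-1)`. -/
def HasScalesOn {n : ℕ} (v : Fin n → ℝ) (A : Finset (Fin n)) (S : ℕ)
    (P : ℕ → Finset (Fin n)) : Prop :=
  (∀ s < S, P s ⊆ A) ∧
  (∀ j ∈ A, ∃! s : ℕ, s < S ∧ j ∈ P s) ∧
  (∀ s : ℕ, s + 1 < S →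
    scaleNorm v (P s) ≥ (4 * (4.706 : ℝ) ^ 2) * scaleNorm v (P (s + 1)))


/-- The signed sum `∑_{j ∈ A} ε_j v_j`, where `ε_j = 1` for `j ∈ T` and `ε_j = -1` otherwise. -/
noncomputable def signedSum {n : ℕ} (v : Fin n → ℝ) (A T : Finset (Fin n)) : ℝ :=
  ∑ j ∈ A, if j ∈ T then v j else -v j

/-- The expectation of `F (∑_{j ∈ A} ε_j v_j)` for independent uniform signs `ε_j`, written as an
average over the subsets `T ⊆ A` of coordinates with sign `+1`. -/
noncomputable def signAvg {n : ℕ} (v : Fin n → ℝ) (A : Finset (Fin n)) (F : ℝ → ℝ) : ℝ :=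
  (∑ T ∈ A.powerset, F (signedSum v A T)) / 2 ^ A.card

/-! ### Averages over random signs -/

section Average

variable {n : ℕ} (v : Fin n → ℝ)

lemma signAvg_empty (F : ℝ → ℝ) : signAvg v ∅ F = F 0 := by
  simp [signAvg, signedSum]

lemma signAvg_insert {j : Fin n} {A : Finset (Fin n)} (hj : j ∉ A) (F : ℝ → ℝ) :
    signAvg v (insert j A) F =
      (signAvg v A (fun x => F (x + v j)) + signAvg v A (fun x => F (x - v j))) / 2 := by
  have h1 : ∀ T ∈ A.powerset, signedSum v (insert j A) T = signedSum v A T - v j := by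
    intro T hT
    have : j ∉ T := fun h => hj (Finset.mem_powerset.1 hT h)
    simp only [signedSum, Finset.sum_insert hj, if_neg this]
    ring
  have h2 : ∀ T ∈ A.powerset,
      signedSum v (insert j A) (insert j T) = signedSum v A T + v j := by
    intro T _
    simp only [signedSum, Finset.sum_insert hj, Finset.mem_insert_self, if_true]
    rw [add_comm]
    congr 1
    refine Finset.sum_congr rfl fun k hk => ?_
    have : k ≠ j := fun h => hj (h ▸ hk)
    simp [Finset.mem_insert, this]
  unfold signAvg
  rw [Finset.sum_powerset_insert hj, Finset.card_insert_of_notMem hj,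
    Finset.sum_congr rfl (fun T hT => by rw [h1 T hT]),
    Finset.sum_congr (s₁ := A.powerset) (f := fun T => F (signedSum v (insert j A) (insert j T)))
      rfl (fun T hT => by rw [h2 T hT]), pow_succ]
  field_simp
  ring

lemma signAvg_mono (A : Finset (Fin n)) {F G : ℝ → ℝ} (h : ∀ x, F x ≤ G x) :
    signAvg v A F ≤ signAvg v A G := by
  unfold signAvg
  gcongr
  exact h _

lemma signAvg_add (A : Finset (Fin n)) (F G : ℝ → ℝ) :
    signAvg v A (fun x => F x + G x) = signAvg v A F + signAvg v A G := by
  simp only [signAvg, Finset.sum_add_distrib, add_div]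

lemma signAvg_const_mul (A : Finset (Fin n)) (c : ℝ) (F : ℝ → ℝ) :
    signAvg v A (fun x => c * F x) = c * signAvg v A F := by
  simp only [signAvg, ← Finset.mul_sum, mul_div_assoc]

lemma signAvg_const (A : Finset (Fin n)) (c : ℝ) : signAvg v A (fun _ => c) = c := by
  simp [signAvg, Finset.card_powerset]

lemma signAvg_neg (A : Finset (Fin n)) (F : ℝ → ℝ) :
    signAvg v A (fun x => F (-x)) = signAvg v A F := by
  induction A using Finset.induction_on generalizing F with
  | empty => simp [signAvg_empty]
  | insert j A hj ih =>
    rw [signAvg_insert v hj, signAvg_insert v hj, add_comm, ← ih (fun x => F (x + v j)),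
      ← ih (fun x => F (x - v j))]
    congr 3 <;> (funext x; congr 1; ring)

lemma signAvg_abs (A : Finset (Fin n)) (F : ℝ → ℝ) :
    signAvg (fun j => |v j|) A F = signAvg v A F := by
  induction A using Finset.induction_on generalizing F with
  | empty => simp [signAvg_empty]
  | insert j A hj ih =>
    rw [signAvg_insert v hj, signAvg_insert _ hj, ih, ih]
    rcases abs_choice (v j) with h | h
    · rw [h]
    · rw [h, add_comm]
      simp only [sub_neg_eq_add, ← sub_eq_add_neg]

lemma signAvg_union {A B : Finset (Fin n)} (h : Disjoint A B) (F : ℝ → ℝ) :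
    signAvg v (A ∪ B) F = signAvg v A (fun x => signAvg v B (fun y => F (x + y))) := by
  induction A using Finset.induction_on generalizing F with
  | empty => simp [signAvg_empty]
  | insert j A hj ih =>
    rw [Finset.disjoint_insert_left] at h
    have hj' : j ∉ A ∪ B := by simp [hj, h.1]
    rw [Finset.insert_union, signAvg_insert v hj', signAvg_insert v hj, ih h.2, ih h.2]
    congr 2 <;> (congr 1; funext x; congr 1; funext y; congr 1; ring)

/-- Averaging over extra signs cannot increase a bound that is uniform in translates. -/
lemma signAvg_le_of_subset {A B : Finset (Fin n)} (h : A ⊆ B) (F : ℝ → ℝ) (c : ℝ)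
    (hc : ∀ y, signAvg v A (fun x => F (y + x)) ≤ c) : signAvg v B F ≤ c := by
  rw [← Finset.sdiff_union_of_subset h, signAvg_union v Finset.sdiff_disjoint]
  calc _ ≤ signAvg v (B \ A) (fun _ => c) := signAvg_mono v _ hc
    _ = c := signAvg_const v _ c

/-! ### Moments of a signed sum -/

lemma signAvg_sq_shift (A : Finset (Fin n)) (a : ℝ) :
    signAvg v A (fun x => (x + a) ^ 2) = ∑ j ∈ A, v j ^ 2 + a ^ 2 := by
  induction A using Finset.induction_on generalizing a with
  | empty => simp [signAvg_empty]
  | insert j A hj ih =>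
    rw [signAvg_insert v hj, Finset.sum_insert hj]
    have e1 := ih (v j + a)
    have e2 := ih (-v j + a)
    simp only [← add_assoc] at e1 e2
    simp only [sub_eq_add_neg, e1, e2]
    ring

lemma signAvg_sq (A : Finset (Fin n)) :
    signAvg v A (fun x => x ^ 2) = ∑ j ∈ A, v j ^ 2 := by
  simpa using signAvg_sq_shift v A 0

/-- The fourth moment of a signed sum is at most that of a Gaussian of the same variance. -/
lemma signAvg_four_le (A : Finset (Fin n)) :
    signAvg v A (fun x => x ^ 4) ≤ 3 * (∑ j ∈ A, v j ^ 2) ^ 2 := by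
  induction A using Finset.induction_on with
  | empty => simp [signAvg_empty]
  | insert j A hj ih =>
    have e : signAvg v (insert j A) (fun x => x ^ 4) =
        signAvg v A (fun x => x ^ 4 + (6 * v j ^ 2 * x ^ 2 + v j ^ 4)) := by
      rw [signAvg_insert v hj, ← signAvg_add, div_eq_inv_mul, ← signAvg_const_mul]
      congr 1
      funext x
      ring
    rw [e, signAvg_add, signAvg_add, signAvg_const_mul, signAvg_const, signAvg_sq,
      Finset.sum_insert hj]
    nlinarith [ih, sq_nonneg (v j ^ 2)]

end Average

/-! ### Small-ball estimate for vectors with many scales -/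

/-- The indicator function of the interval `[a - R, a + R]`. -/
noncomputable def ballInd (a R x : ℝ) : ℝ := if |x - a| ≤ R then 1 else 0

lemma ballInd_mono {a R b R' x y : ℝ} (h : |x - a| ≤ R → |y - b| ≤ R') :
    ballInd a R x ≤ ballInd b R' y := by
  unfold ballInd
  split_ifs <;> simp_all

/-- One step of the small-ball estimate: adding an independent scale of norm `σ` to a sum `W`
(the signed sum over `A`) gains a factor `9/10`, provided `W` is already known to be spread out at
the larger radius `R + 3σ`. If the new contribution `±y` satisfies `σ/2 ≤ |y| ≤ 3σ`, its two signs
lead to disjoint events, both contained in a single ball for `W`; this happens with probability at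
least `1/5` by the second and fourth moments. -/
lemma small_ball_step {n : ℕ} (v : Fin n → ℝ) {A B : Finset (Fin n)} (hAB : Disjoint B A)
    {σ R q : ℝ} (hσ : 0 < σ) (hR : R ≤ σ / 4) (hq : 0 ≤ q) (hσB : ∑ j ∈ B, v j ^ 2 = σ ^ 2)
    (hA : ∀ a, signAvg v A (ballInd a (R + 3 * σ)) ≤ q) (a : ℝ) :
    signAvg v (B ∪ A) (ballInd a R) ≤ 9 / 10 * q := by
  rw [signAvg_union v hAB]
  set g : ℝ → ℝ := fun y => signAvg v A (fun x => ballInd a R (y + x)) with hg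
  have hgq : ∀ y, g y ≤ q := by
    intro y
    refine le_trans (signAvg_mono v A fun x => ?_) (hA (a - y))
    refine ballInd_mono fun h => ?_
    rw [show x - (a - y) = y + x - a by ring]
    linarith
  have hgood : ∀ y, σ / 2 ≤ |y| → |y| ≤ 3 * σ → g y + g (-y) ≤ q := by
    intro y h1 h2
    simp only [hg]
    rw [← signAvg_add]
    refine le_trans (signAvg_mono v A fun x => ?_) (hA a)
    have hp := abs_le.1 h2
    unfold ballInd
    split_ifs with c1 c2 c3 c3 c3 c3 <;> try norm_num
    · rw [abs_le] at c1 c2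
      rcases abs_cases y with ⟨e, _⟩ | ⟨e, _⟩ <;> linarith
    · rw [abs_le] at c1 c2
      rcases abs_cases y with ⟨e, _⟩ | ⟨e, _⟩ <;> linarith
    · refine c3 ?_
      rw [abs_le] at c1 ⊢
      constructor <;> linarith
    · rename_i c2
      refine c3 ?_
      rw [abs_le] at c2 ⊢
      constructor <;> linarith
  have hσ4 : 0 < σ ^ 4 := by positivity
  -- `(y² - σ²/4)(9σ² - y²)` is positive only for `σ/2 ≤ |y| ≤ 3σ`, and at most `(35/8)²σ⁴`.
  have hpt : ∀ y, g y + g (-y) ≤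
      2 * q + (-(q * (1 / 20) / σ ^ 4)) * ((y ^ 2 - σ ^ 2 / 4) * (9 * σ ^ 2 - y ^ 2)) := by
    intro y
    have hy2 : |y| ^ 2 = y ^ 2 := sq_abs y
    by_cases hc : σ / 2 ≤ |y| ∧ |y| ≤ 3 * σ
    · have h := hgood y hc.1 hc.2
      have hm : (y ^ 2 - σ ^ 2 / 4) * (9 * σ ^ 2 - y ^ 2) ≤ 20 * σ ^ 4 := by
        nlinarith [sq_nonneg (2 * y ^ 2 - (9 + 1 / 4) * σ ^ 2)]
      have : q * (1 / 20) / σ ^ 4 * ((y ^ 2 - σ ^ 2 / 4) * (9 * σ ^ 2 - y ^ 2)) ≤ q := by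
        calc _ ≤ q * (1 / 20) / σ ^ 4 * (20 * σ ^ 4) := by gcongr
          _ = q := by field_simp
      linarith
    · have hm : (y ^ 2 - σ ^ 2 / 4) * (9 * σ ^ 2 - y ^ 2) ≤ 0 := by
        rw [← hy2]
        rcases lt_or_ge |y| (σ / 2) with h | h
        · refine mul_nonpos_of_nonpos_of_nonneg ?_ ?_ <;> nlinarith [abs_nonneg y]
        · have h' : 3 * σ < |y| := by
            by_contra h'
            exact hc ⟨h, not_lt.1 h'⟩
          refine mul_nonpos_of_nonneg_of_nonpos ?_ ?_ <;> nlinarith [abs_nonneg y]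
      have : q * (1 / 20) / σ ^ 4 * ((y ^ 2 - σ ^ 2 / 4) * (9 * σ ^ 2 - y ^ 2)) ≤ 0 :=
        mul_nonpos_of_nonneg_of_nonpos (by positivity) hm
      linarith [hgq y, hgq (-y)]
  have hmom : 4 * σ ^ 4 ≤
      signAvg v B (fun y => (y ^ 2 - σ ^ 2 / 4) * (9 * σ ^ 2 - y ^ 2)) := by
    have e : (fun y : ℝ => (y ^ 2 - σ ^ 2 / 4) * (9 * σ ^ 2 - y ^ 2)) =
        fun y => (37 / 4 * σ ^ 2) * y ^ 2 + ((-1) * y ^ 4 + (-(9 / 4) * σ ^ 4)) := by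
      funext y
      ring
    have h4 := signAvg_four_le v B
    rw [e, signAvg_add, signAvg_add, signAvg_const_mul, signAvg_const_mul, signAvg_const,
      signAvg_sq, hσB]
    rw [hσB] at h4
    nlinarith
  have hsym : 2 * signAvg v B g = signAvg v B (fun y => g y + g (-y)) := by
    rw [signAvg_add, signAvg_neg]
    ring
  have h1 := signAvg_mono v B hpt
  rw [← hsym, signAvg_add, signAvg_const, signAvg_const_mul] at h1
  have h2 : q * (1 / 20) / σ ^ 4 * (4 * σ ^ 4) ≤ q * (1 / 20) / σ ^ 4 *
      signAvg v B (fun y => (y ^ 2 - σ ^ 2 / 4) * (9 * σ ^ 2 - y ^ 2)) := by gcongr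
  have h3 : q * (1 / 20) / σ ^ 4 * (4 * σ ^ 4) = q / 5 := by
    field_simp
    ring
  linarith

/-- A sum with `m` scales, each at least `13` times larger than all the later ones, puts mass at
most `(9/10)^m` on any interval whose radius is a quarter of the smallest scale. -/
lemma small_ball_scales {n : ℕ} (v : Fin n → ℝ) (P : ℕ → Finset (Fin n)) (m : ℕ)
    (hdisj : ∀ t < m, ∀ s < t, Disjoint (P t) (P s))
    (hpos : ∀ t < m, 0 < scaleNorm v (P t))
    (hdec : ∀ t < m, ∀ s < t, 13 * scaleNorm v (P t) ≤ scaleNorm v (P s))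
    (R : ℝ) (hR : ∀ s < m, R ≤ scaleNorm v (P s) / 4) (a : ℝ) :
    signAvg v ((Finset.range m).biUnion P) (ballInd a R) ≤ (9 / 10) ^ m := by
  induction m generalizing R a with
  | zero =>
    simp only [Finset.range_zero, Finset.biUnion_empty, signAvg_empty, pow_zero, ballInd]
    split_ifs <;> norm_num
  | succ m ih =>
    rw [Finset.range_add_one, Finset.biUnion_insert, pow_succ, mul_comm]
    have hm := m.lt_succ_self
    refine small_ball_step v ?_ (hpos m hm) (hR m hm) (by positivity) ?_ (fun b => ?_) a
    · rw [Finset.disjoint_biUnion_right]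
      exact fun s hs => hdisj m hm s (Finset.mem_range.1 hs)
    · rw [scaleNorm, Real.sq_sqrt]
      exact Finset.sum_nonneg fun j _ => sq_nonneg _
    · refine ih (fun t ht => hdisj t (by omega)) (fun t ht => hpos t (by omega))
        (fun t ht => hdec t (by omega)) _ (fun s hs => ?_) b
      have h1 := hR m hm
      have h2 := hdec m hm s hs
      linarith

/-! ### The Erdős–Littlewood–Offord inequality -/

lemma centralBinom_sq_mul_le (k : ℕ) : k.centralBinom ^ 2 * (2 * k + 1) ≤ 16 ^ k := by
  induction k with
  | zero => simp
  | succ k ih =>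
    have h := Nat.succ_mul_centralBinom_succ k
    have hp : 0 < (k + 1) ^ 2 := by positivity
    refine Nat.le_of_mul_le_mul_left ?_ hp
    calc (k + 1) ^ 2 * ((k + 1).centralBinom ^ 2 * (2 * (k + 1) + 1))
        = ((k + 1) * (k + 1).centralBinom) ^ 2 * (2 * (k + 1) + 1) := by ring
      _ = 4 * (2 * k + 1) * (2 * k + 3) * (k.centralBinom ^ 2 * (2 * k + 1)) := by
        rw [h]; ring
      _ ≤ 4 * (2 * k + 1) * (2 * k + 3) * 16 ^ k := by gcongr
      _ ≤ 16 * (k + 1) ^ 2 * 16 ^ k :=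
        Nat.mul_le_mul_right _ (by nlinarith)
      _ = (k + 1) ^ 2 * 16 ^ (k + 1) := by ring

lemma choose_half_sq_mul_le (m : ℕ) : (m.choose (m / 2)) ^ 2 * (m + 1) ≤ 4 ^ m := by
  rcases Nat.even_or_odd' m with ⟨k, rfl | rfl⟩
  · have := centralBinom_sq_mul_le k
    rw [Nat.centralBinom] at this
    rw [Nat.mul_div_cancel_left k two_pos, pow_mul]
    exact this
  · have h := centralBinom_sq_mul_le (k + 1)
    have e : (k + 1).centralBinom = 2 * (2 * k + 1).choose k := by
      rw [Nat.centralBinom, show 2 * (k + 1) = (2 * k + 1) + 1 by ring, Nat.choose_succ_succ,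
        Nat.choose_symm_half]
      ring
    rw [e] at h
    have e2 : (2 * k + 1) / 2 = k := by omega
    rw [e2]
    have e3 : (4 : ℕ) ^ (2 * k + 1) * 4 = 16 ^ (k + 1) := by
      rw [← pow_succ, show 2 * k + 1 + 1 = 2 * (k + 1) by ring, pow_mul]
      norm_num
    nlinarith

/-- Subsets `T ⊆ B` with a prescribed signed sum of positive weights form an antichain, so
Sperner's theorem on the ground set `B` bounds their number. -/
lemma card_signedSum_eq_le {n : ℕ} (v : Fin n → ℝ) (B : Finset (Fin n)) (hv : ∀ j ∈ B, 0 < v j)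
    (b : ℝ) :
    (B.powerset.filter (fun T => signedSum v B T = b)).card ≤ B.card.choose (B.card / 2) := by
  set 𝒜 := B.powerset.filter (fun T => signedSum v B T = b) with h𝒜
  have hinj : Set.InjOn (fun T : Finset (Fin n) => T.subtype (· ∈ B)) (𝒜 : Set (Finset (Fin n))) := by
    intro T hT U hU h
    have hT' : T ⊆ B := Finset.mem_powerset.1 (Finset.mem_filter.1 hT).1
    have hU' : U ⊆ B := Finset.mem_powerset.1 (Finset.mem_filter.1 hU).1
    ext j
    constructor
    · intro hj
      have : (⟨j, hT' hj⟩ : {x // x ∈ B}) ∈ T.subtype (· ∈ B) := by simpa using hj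
      have h' : (⟨j, hT' hj⟩ : {x // x ∈ B}) ∈ U.subtype (· ∈ B) := by
        simp only at h
        rwa [← h]
      simpa using h'
    · intro hj
      have : (⟨j, hU' hj⟩ : {x // x ∈ B}) ∈ U.subtype (· ∈ B) := by simpa using hj
      have h' : (⟨j, hU' hj⟩ : {x // x ∈ B}) ∈ T.subtype (· ∈ B) := by
        simp only at h
        rwa [h]
      simpa using h'
  have hanti : IsAntichain (· ⊆ ·)
      (((𝒜.image (fun T => T.subtype (· ∈ B))) : Finset (Finset {x // x ∈ B})) :
        Set (Finset {x // x ∈ B})) := by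
    intro X hX Y hY hne hsub
    obtain ⟨T, hT, rfl⟩ := Finset.mem_image.1 (Finset.mem_coe.1 hX)
    obtain ⟨U, hU, rfl⟩ := Finset.mem_image.1 (Finset.mem_coe.1 hY)
    have hTb := (Finset.mem_filter.1 hT).2
    have hUb := (Finset.mem_filter.1 hU).2
    have hTU : ∀ j ∈ B, j ∈ T → j ∈ U := by
      intro j hj hjT
      have : (⟨j, hj⟩ : {x // x ∈ B}) ∈ T.subtype (· ∈ B) := by simpa using hjT
      simpa using hsub this
    have hex : ∃ j ∈ B, j ∈ U ∧ j ∉ T := by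
      by_contra hcon
      push Not at hcon
      refine hne ?_
      ext ⟨j, hj⟩
      simp only [Finset.mem_subtype]
      exact ⟨hTU j hj, hcon j hj⟩
    have hlt : signedSum v B T < signedSum v B U := by
      refine Finset.sum_lt_sum (fun j hj => ?_) ?_
      · have := hv j hj
        have := hTU j hj
        split_ifs <;> first | linarith | simp_all
      · obtain ⟨j, hj, hjU, hjT⟩ := hex
        refine ⟨j, hj, ?_⟩
        have := hv j hj
        rw [if_pos hjU, if_neg hjT]
        linarith
    rw [hTb, hUb] at hlt
    exact lt_irrefl _ hlt
  have := hanti.sperner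
  rw [Finset.card_image_of_injOn hinj, Fintype.card_coe] at this
  exact this

/-- If at least `4k²` of the coefficients are nonzero, a signed sum takes any given value with
probability at most `1/(2k)`. -/
lemma littlewood_offord {n : ℕ} (v : Fin n → ℝ) (A : Finset (Fin n)) (k : ℕ)
    (hk : 4 * k ^ 2 ≤ (A.filter (fun j => v j ≠ 0)).card) (b : ℝ) :
    2 * k * signAvg v A (ballInd b 0) ≤ 1 := by
  rcases Nat.eq_zero_or_pos k with rfl | hkpos
  · simp
  have hkR : (0 : ℝ) < k := by exact_mod_cast hkpos
  set B := A.filter (fun j => v j ≠ 0) with hB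
  suffices h : signAvg v A (ballInd b 0) ≤ 1 / (2 * k) by
    rw [le_div_iff₀ (by positivity)] at h
    linarith
  refine signAvg_le_of_subset v (Finset.filter_subset (fun j => v j ≠ 0) A) _ _ fun y => ?_
  rw [← hB, ← signAvg_abs]
  have e : signAvg (fun j => |v j|) B (fun x => ballInd b 0 (y + x)) =
      ((B.powerset.filter (fun T => signedSum (fun j => |v j|) B T = b - y)).card : ℝ)
        / 2 ^ B.card := by
    rw [signAvg, Finset.card_filter (fun T => signedSum (fun j => |v j|) B T = b - y),
      Nat.cast_sum]
    congr 1
    refine Finset.sum_congr rfl fun T _ => ?_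
    have : (|y + signedSum (fun j => |v j|) B T - b| ≤ 0) ↔
        signedSum (fun j => |v j|) B T = b - y := by
      rw [abs_nonpos_iff]
      constructor <;> intro h <;> linarith
    simp only [ballInd, this]
    split_ifs <;> simp
  have hc := card_signedSum_eq_le (fun j => |v j|) B
    (fun j hj => abs_pos.2 (Finset.mem_filter.1 hj).2) (b - y)
  have hch := choose_half_sq_mul_le B.card
  rw [e, div_le_div_iff₀ (by positivity) (by positivity), one_mul]
  set c := (B.powerset.filter (fun T => signedSum (fun j => |v j|) B T = b - y)).card
  have hnat : (c * (2 * k)) ^ 2 ≤ (2 ^ B.card) ^ 2 := by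
    calc (c * (2 * k)) ^ 2 = c ^ 2 * (4 * k ^ 2) := by ring
      _ ≤ (B.card.choose (B.card / 2)) ^ 2 * (B.card + 1) := by
        gcongr
        omega
      _ ≤ 4 ^ B.card := hch
      _ = (2 ^ B.card) ^ 2 := by rw [← pow_mul, mul_comm, pow_mul]; norm_num
  have := (Nat.pow_le_pow_iff_left two_ne_zero).1 hnat
  exact_mod_cast this

/-! ### Assembling the two estimates -/

/-- In a vector with `S` scales, norms decay geometrically between any two scales. -/
lemma HasScalesOn.pow_mul_le {n : ℕ} {v : Fin n → ℝ} {A : Finset (Fin n)} {S : ℕ}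
    {P : ℕ → Finset (Fin n)} (h : HasScalesOn v A S P) (d s : ℕ) (hs : s + d < S) :
    (4 * (4.706 : ℝ) ^ 2) ^ d * scaleNorm v (P (s + d)) ≤ scaleNorm v (P s) := by
  induction d with
  | zero => simp
  | succ d ih =>
    have h1 := ih (by omega)
    have h2 := h.2.2 (s + d) (by omega)
    calc _ = (4 * (4.706 : ℝ) ^ 2) ^ d *
          ((4 * (4.706 : ℝ) ^ 2) * scaleNorm v (P (s + d + 1))) := by
            rw [pow_succ, mul_assoc]; rfl
      _ ≤ (4 * (4.706 : ℝ) ^ 2) ^ d * scaleNorm v (P (s + d)) := by gcongr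
      _ ≤ _ := h1

/-- If `v` has `S` scales on `N₁ ∪ N₂` and `N₁` lies in the smallest one, the first `m` scales live
in `N₂` and dominate `n` times the smallest scale, whence the signed sum over `N₂` rarely comes
within `2n` smallest-scale norms of a given point. -/
lemma HasScalesOn.small_ball {n : ℕ} {v : Fin n → ℝ} {N₁ N₂ : Finset (Fin n)} {S : ℕ}
    {P : ℕ → Finset (Fin n)} (h : HasScalesOn v (N₁ ∪ N₂) S P)
    (hne : scaleNorm v (P (S - 1)) ≠ 0) (hN : N₁ ⊆ P (S - 1)) (m : ℕ) (hm : m < S)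
    (hbig : 8 * (n : ℝ) ≤ (4 * (4.706 : ℝ) ^ 2) ^ (S - m)) (a : ℝ) :
    signAvg v N₂ (ballInd a (2 * n * scaleNorm v (P (S - 1)))) ≤ (9 / 10) ^ m := by
  have hlast : 0 < scaleNorm v (P (S - 1)) := lt_of_le_of_ne (Real.sqrt_nonneg _) (Ne.symm hne)
  have huniq : ∀ s < S, ∀ t < S, ∀ j, j ∈ P s → j ∈ P t → s = t := by
    intro s hs t ht j hjs hjt
    exact (h.2.1 j (h.1 s hs hjs)).unique ⟨hs, hjs⟩ ⟨ht, hjt⟩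
  have hC : (13 : ℝ) ≤ 4 * (4.706 : ℝ) ^ 2 := by norm_num
  have hC1 : (1 : ℝ) ≤ 4 * (4.706 : ℝ) ^ 2 := by norm_num
  have hsub : (Finset.range m).biUnion P ⊆ N₂ := by
    intro j hj
    obtain ⟨s, hs, hjs⟩ := Finset.mem_biUnion.1 hj
    have hs' := Finset.mem_range.1 hs
    rcases Finset.mem_union.1 (h.1 s (by omega) hjs) with h1 | h1
    · have := huniq s (by omega) (S - 1) (by omega) j hjs (hN h1)
      omega
    · exact h1
  have hlow : ∀ s < m, (4 * (4.706 : ℝ) ^ 2) ^ (S - m) * scaleNorm v (P (S - 1)) ≤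
      scaleNorm v (P s) := by
    intro s hs
    have h1 := h.pow_mul_le (S - 1 - s) s (by omega)
    rw [show s + (S - 1 - s) = S - 1 by omega] at h1
    refine le_trans ?_ h1
    exact mul_le_mul_of_nonneg_right (pow_le_pow_right₀ hC1 (by omega)) hlast.le
  refine signAvg_le_of_subset v hsub _ _ fun y => ?_
  have hball : (fun x => ballInd a (2 * n * scaleNorm v (P (S - 1))) (y + x)) =
      ballInd (a - y) (2 * n * scaleNorm v (P (S - 1))) := by
    funext x
    unfold ballInd
    rw [show y + x - a = x - (a - y) by ring]
  rw [hball]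
  refine small_ball_scales v P m ?_ ?_ ?_ _ ?_ _
  · intro t ht s hs
    rw [Finset.disjoint_left]
    intro j hjt hjs
    have := huniq t (by omega) s (by omega) j hjt hjs
    omega
  · intro t ht
    refine lt_of_lt_of_le ?_ (hlow t ht)
    positivity
  · intro t ht s hs
    have h1 := h.pow_mul_le (t - s) s (by omega)
    rw [show s + (t - s) = t by omega] at h1
    refine le_trans ?_ h1
    gcongr
    · exact Real.sqrt_nonneg _
    · exact hC.trans (le_self_pow₀ hC1 (by omega))
  · intro s hs
    have h1 := hlow s hs
    have h2 : 8 * (n : ℝ) * scaleNorm v (P (S - 1)) ≤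
        (4 * (4.706 : ℝ) ^ 2) ^ (S - m) * scaleNorm v (P (S - 1)) := by gcongr
    linarith

lemma abs_sum_le_card_mul_scaleNorm {n : ℕ} (v x : Fin n → ℝ) (hx : ∀ j, x j = 0 ∨ x j = 1)
    {A B : Finset (Fin n)} (hAB : A ⊆ B) :
    |∑ j ∈ A, x j * v j| ≤ n * scaleNorm v B := by
  have hterm : ∀ j ∈ A, |x j * v j| ≤ scaleNorm v B := by
    intro j hj
    have h1 : |v j| ≤ scaleNorm v B := by
      rw [scaleNorm, ← Real.sqrt_sq_eq_abs]
      exact Real.sqrt_le_sqrt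
        (Finset.single_le_sum (f := fun j => v j ^ 2) (fun i _ => sq_nonneg _) (hAB hj))
    rcases hx j with h | h
    · simp only [h, zero_mul, abs_zero]
      exact Real.sqrt_nonneg _
    · simpa [h] using h1
  calc |∑ j ∈ A, x j * v j| ≤ ∑ j ∈ A, |x j * v j| := Finset.abs_sum_le_sum_abs _ _
    _ ≤ A.card • scaleNorm v B := Finset.sum_le_card_nsmul _ _ _ hterm
    _ ≤ n * scaleNorm v B := by
      rw [nsmul_eq_mul]
      gcongr
      · exact Real.sqrt_nonneg _
      · simpa using Finset.card_le_univ A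

lemma signedSum_eq {n : ℕ} (v : Fin n → ℝ) (A T : Finset (Fin n)) :
    signedSum v A T = 2 * ∑ j ∈ A, (if j ∈ T then (1 : ℝ) else 0) * v j - ∑ j ∈ A, v j := by
  rw [signedSum, Finset.mul_sum, ← Finset.sum_sub_distrib]
  refine Finset.sum_congr rfl fun j _ => ?_
  split_ifs <;> ring

/-- The choice `C₅ = 100` with half of the scales spent on each of the two requirements. -/
lemma scale_count_bounds (n : ℕ) (hn : 2 ≤ n) (S : ℕ) (hS : S = ⌊100 * Real.log n⌋₊) :
    S / 2 < S ∧ 8 * (n : ℝ) ≤ (4 * (4.706 : ℝ) ^ 2) ^ (S - S / 2) ∧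
      (n : ℝ) * (9 / 10) ^ (S / 2) < 1 / 2 := by
  have hn' : (2 : ℝ) ≤ n := by exact_mod_cast hn
  have hlog2 := Real.log_two_gt_d9
  have hlog : Real.log 2 ≤ Real.log n := Real.log_le_log (by norm_num) hn'
  have hnexp : Real.exp (Real.log n) = n := Real.exp_log (by linarith)
  set L := Real.log n
  have hfl : 100 * L < S + 1 := by
    rw [hS]
    exact Nat.lt_floor_add_one _
  have hSbig : 60 < S := by
    have : (60 : ℝ) < S := by linarith
    exact_mod_cast this
  have hd1 : (S : ℝ) ≤ 2 * ((S / 2 : ℕ) : ℝ) + 1 := by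
    have : S ≤ 2 * (S / 2) + 1 := by omega
    exact_mod_cast this
  have hd2 : (S : ℝ) ≤ 2 * ((S - S / 2 : ℕ) : ℝ) := by
    have : S ≤ 2 * (S - S / 2) := by omega
    exact_mod_cast this
  have hexp1 := Real.exp_one_lt_d9
  have h16 : (16 : ℝ) ≤ Real.exp (4 * L) := by
    rw [show 4 * L = L + L + L + L by ring, Real.exp_add, Real.exp_add, Real.exp_add, hnexp]
    have : (4 : ℝ) ≤ n * n := by nlinarith
    nlinarith
  refine ⟨by omega, ?_, ?_⟩
  · calc 8 * (n : ℝ) ≤ Real.exp (4 * L) * Real.exp L := by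
          rw [hnexp]; nlinarith
      _ = Real.exp (5 * L) := by rw [← Real.exp_add]; ring_nf
      _ ≤ Real.exp (((S - S / 2 : ℕ) : ℝ) * 1) := by
          apply Real.exp_le_exp.2; linarith
      _ = Real.exp 1 ^ (S - S / 2) := Real.exp_nat_mul 1 _
      _ ≤ _ := by
          gcongr
          linarith [show (3 : ℝ) ≤ 4 * (4.706 : ℝ) ^ 2 by norm_num]
  · have h1 : (9 / 10 : ℝ) ≤ Real.exp (-(1 / 10)) := by
      have := Real.add_one_le_exp (-(1 / 10) : ℝ)
      linarith
    have h2 : (9 / 10 : ℝ) ^ (S / 2) ≤ Real.exp (-(4 * L)) := by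
      calc (9 / 10 : ℝ) ^ (S / 2) ≤ Real.exp (-(1 / 10)) ^ (S / 2) := by gcongr
        _ = Real.exp (((S / 2 : ℕ) : ℝ) * (-(1 / 10))) := (Real.exp_nat_mul _ _).symm
        _ ≤ Real.exp (-(4 * L)) := by
          apply Real.exp_le_exp.2; linarith
    have h3 : (n : ℝ) * Real.exp (-(4 * L)) = Real.exp (-(3 * L)) := by
      conv_lhs => rw [← hnexp]
      rw [← Real.exp_add]; ring_nf
    have h4 : Real.exp (-(3 * L)) < 1 / 2 := by
      rw [Real.exp_neg, ← one_div]
      apply one_div_lt_one_div_of_lt (by norm_num)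
      have := Real.add_one_le_exp (3 * L)
      linarith
    calc _ ≤ (n : ℝ) * Real.exp (-(4 * L)) := by gcongr
      _ < 1 / 2 := by rw [h3]; exact h4

/-- First-moment method: if the probabilities of the bad events sum to less than `1`, some choice
of signs avoids all of them. -/
lemma exists_subset_of_sum_lt_one {n : ℕ} {ι : Type} (K : Finset ι) (v : ι → Fin n → ℝ)
    (A : Finset (Fin n)) (a R : ι → ℝ)
    (h : ∑ i ∈ K, signAvg (v i) A (ballInd (a i) (R i)) < 1) :
    ∃ T ⊆ A, ∀ i ∈ K, ¬ |signedSum (v i) A T - a i| ≤ R i := by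
  by_contra hcon
  push Not at hcon
  refine absurd h (not_lt.2 ?_)
  simp only [signAvg]
  rw [← Finset.sum_div, Finset.sum_comm, le_div_iff₀ (by positivity), one_mul]
  have hcard : ((2 : ℝ) ^ A.card) = ∑ T ∈ A.powerset, (1 : ℝ) := by
    simp [Finset.card_powerset]
  rw [hcard]
  refine Finset.sum_le_sum fun T hT => ?_
  obtain ⟨i, hi, hbad⟩ := hcon T (Finset.mem_powerset.1 hT)
  have h1 : ballInd (a i) (R i) (signedSum (v i) A T) = 1 := if_pos hbad
  rw [← h1]
  refine Finset.single_le_sum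
    (f := fun i => ballInd (a i) (R i) (signedSum (v i) A T)) (fun j _ => ?_) hi
  unfold ballInd
  split_ifs <;> norm_num

/-- There exist `C₅ > 0` and `n₀` such that for all `n ≥ n₀` the following holds. Let
`[n] = N₁ ∪ N₂ ∪ N₃` be a partition, `S = ⌊C₅ log n⌋`, and let `K₂, K₄` be disjoint
finite index sets with `|K₄| ≤ n`, with vectors `v i ∈ ℝ^n` and reals `μ' i` for
`i ∈ K₂ ∪ K₄`. If every `i ∈ K₂` satisfies `v i = 0` on `N₁` and
`|supp(v i |_{N₂})| ≥ 4|K₂|²`, and for every `i ∈ K₄` the restriction of `v i` to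
`N₁ ∪ N₂` has `S` scales, with nonzero smallest scale whose position contains `N₁`,
then there is `w ∈ {0,1}^{N₂}` such that for all `i ∈ K₂ ∪ K₄` and all
`x ∈ {0,1}^{N₁}`, `⟨w, v i |_{N₂}⟩ ≠ μ' i - ⟨x, v i |_{N₁}⟩`. -/
theorem exists_good_subcube_point :
    ∃ C₅ : ℝ, C₅ > 0 ∧ ∃ n₀ : ℕ, ∀ n : ℕ, n₀ ≤ n →
      ∀ N₁ N₂ N₃ : Finset (Fin n),
        (N₁ ∪ N₂ ∪ N₃ = Finset.univ) →
        Disjoint N₁ N₂ → Disjoint N₁ N₃ → Disjoint N₂ N₃ →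
      ∀ S : ℕ, S = ⌊C₅ * Real.log n⌋₊ →
      ∀ (ι : Type) (K₂ K₄ : Finset ι), Disjoint K₂ K₄ → K₄.card ≤ n →
      ∀ (v : ι → Fin n → ℝ) (μ' : ι → ℝ),
        (∀ i ∈ K₂, (∀ j ∈ N₁, v i j = 0) ∧
          4 * K₂.card ^ 2 ≤ {j : Fin n | j ∈ N₂ ∧ v i j ≠ 0}.ncard) →
        (∀ i ∈ K₄, ∃ P : ℕ → Finset (Fin n),
          HasScalesOn (v i) (N₁ ∪ N₂) S P ∧
          scaleNorm (v i) (P (S - 1)) ≠ 0 ∧ N₁ ⊆ P (S - 1)) →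
      ∃ w : Fin n → ℝ, (∀ j, w j = 0 ∨ w j = 1) ∧
        ∀ i, (i ∈ K₂ ∨ i ∈ K₄) →
          ∀ x : Fin n → ℝ, (∀ j, x j = 0 ∨ x j = 1) →
            ∑ j ∈ N₂, w j * v i j ≠ μ' i - ∑ j ∈ N₁, x j * v i j := by
  classical
  refine ⟨100, by norm_num, 2, ?_⟩
  intro n hn N₁ N₂ N₃ _ _ _ _ S hS ι K₂ K₄ hK hK₄ v μ' h₂ h₄
  obtain ⟨hm, hbig, hsmall⟩ := scale_count_bounds n hn S hS
  choose! P hP hne hN using h₄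
  -- The centre and radius of the bad interval for the signed sum `2⟨w, v i⟩ - ∑ v i` over `N₂`.
  set a : ι → ℝ := fun i => 2 * μ' i - ∑ j ∈ N₂, v i j with ha
  set R : ι → ℝ := fun i => if i ∈ K₂ then 0 else 2 * n * scaleNorm (v i) (P i (S - 1)) with hRdef
  have hnot : ∀ i ∈ K₄, i ∉ K₂ := fun i hi hi' => Finset.disjoint_left.1 hK hi' hi
  have hsum₂ : ∑ i ∈ K₂, signAvg (v i) N₂ (ballInd (a i) (R i)) ≤ 1 / 2 := by
    have hle : ∀ i ∈ K₂, signAvg (v i) N₂ (ballInd (a i) (R i)) ≤ 1 / (2 * K₂.card) := by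
      intro i hi
      have hpos : (0 : ℝ) < K₂.card := by exact_mod_cast Finset.card_pos.2 ⟨i, hi⟩
      have hcard : 4 * K₂.card ^ 2 ≤ (N₂.filter (fun j => v i j ≠ 0)).card := by
        rw [← Set.ncard_coe_finset (N₂.filter _), Finset.coe_filter]
        exact (h₂ i hi).2
      have := littlewood_offord (v i) N₂ K₂.card hcard (a i)
      rw [le_div_iff₀ (by positivity)]
      simp only [hRdef, if_pos hi]
      linarith
    refine (Finset.sum_le_card_nsmul _ _ _ hle).trans ?_
    rw [nsmul_eq_mul]
    rcases Nat.eq_zero_or_pos K₂.card with h0 | h0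
    · simp [h0]
    · have : (0 : ℝ) < K₂.card := by exact_mod_cast h0
      apply le_of_eq
      field_simp
  have hsum₄ : ∑ i ∈ K₄, signAvg (v i) N₂ (ballInd (a i) (R i)) < 1 / 2 := by
    have hle : ∀ i ∈ K₄, signAvg (v i) N₂ (ballInd (a i) (R i)) ≤ (9 / 10) ^ (S / 2) := by
      intro i hi
      simp only [hRdef, if_neg (hnot i hi)]
      exact (hP i hi).small_ball (hne i hi) (hN i hi) _ hm hbig _
    refine lt_of_le_of_lt ((Finset.sum_le_card_nsmul _ _ _ hle).trans ?_) hsmall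
    rw [nsmul_eq_mul]
    gcongr
  obtain ⟨T, -, hT⟩ := exists_subset_of_sum_lt_one (K₂ ∪ K₄) v N₂ a R (by
    rw [Finset.sum_union hK]
    linarith)
  refine ⟨fun j => if j ∈ T then 1 else 0, fun j => ?_, ?_⟩
  · by_cases h : j ∈ T <;> simp [h]
  intro i hi x hx heq
  refine hT i (Finset.mem_union.2 hi) ?_
  have hval : signedSum (v i) N₂ T - a i = -(2 * ∑ j ∈ N₁, x j * v i j) := by
    rw [signedSum_eq, heq]
    simp only [ha]
    ring
  rw [hval, abs_neg, abs_mul, abs_two]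
  by_cases h2 : i ∈ K₂
  · have hz : ∑ j ∈ N₁, x j * v i j = 0 :=
      Finset.sum_eq_zero fun j hj => by rw [(h₂ i h2).1 j hj, mul_zero]
    simp [hRdef, h2, hz]
  · have h4 : i ∈ K₄ := hi.resolve_left h2
    have := abs_sum_le_card_mul_scaleNorm (v i) x hx (hN i h4)
    simp only [hRdef, if_neg h2]
    linarith
end
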